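/- arXiv:2105.06416 — 4 statements merged into one kernel-verified Lean document; each statement's English description precedes it below -/
import Mathlib

section
/- Let 1 < ρ < 2. There exists a constant M₂ > 0, depending only on ρ, such that for every x > 0, |E_{ρ,ρ}(−x)| ≤ M₂/(1 + x), where E_{ρ,ρ} is the two-parametric Mittag-Leffler function. -/
/-!
The function `t ↦ t ^ ρ * E_{ρ,ρ}(-t ^ ρ)` has Laplace transform
`G(s) = ρ s ^ (ρ - 1) / (1 + s ^ ρ) ^ 2` (`mlKernel`). Expanding `G` in powers of `s ^ (-ρ)` on the
line `Re s = 2` and inverting each term by Fourier inversion (`inverse_laplace`) gives the Bromwich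
formula `t ^ ρ * E_{ρ,ρ}(-t ^ ρ) = (1 / 2π) ∫ e^{st} G(s) dw`, `s = 2 + i w`
(`hasSum_mittagLeffler`).

Since `1 < ρ < 2`, the zeros of `1 + s ^ ρ` all lie in the open left half-plane, and
`‖G(s)‖ ≤ K / (1 + (Im s) ^ 2)` uniformly for `Re s > 0` (`exists_norm_mlKernel_le`). The line of
integration can therefore be moved to the left (`integral_line_eq`), as far as `Re s = 1 / t` when
`t` is large, where `e^{st}` is bounded. So `x E_{ρ,ρ}(-x)`, with `x = t ^ ρ`, is bounded
(`exists_integral_line_le`). For `x ≤ 1` the series is dominated by `∑ 1 / Γ(ρ(k+1))`.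
-/

/-- The two-parametric Mittag-Leffler function `E_{ρ,ρ}(x) = ∑ x^k / Γ(ρ(k+1))`. -/
noncomputable def mittagLeffler2 (ρ x : ℝ) : ℝ :=
  ∑' k : ℕ, x ^ k / Real.Gamma (ρ * (k + 1))

open Complex MeasureTheory Set Filter Topology
open ProbabilityTheory

/-! ### Laplace transforms of powers and their inversion -/

lemma integrableOn_rpow_mul_exp {a c : ℝ} (ha : 0 < a) (hc : 0 < c) :
    IntegrableOn (fun u : ℝ => u ^ (a - 1) * Real.exp (-(c * u))) (Ioi 0) := by
  have := integrableOn_rpow_mul_exp_neg_mul_rpow (p := 1) (s := a - 1) (b := c)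
    (by linarith) one_pos hc
  simpa [neg_mul] using this

/-- The Laplace transform of `u ^ (a - 1)` at complex `s`: both sides are analytic in the right
half-plane, the left one being a complex moment generating function, and they agree for real `s`. -/
lemma laplace_rpow {a : ℝ} (ha : 0 < a) {s : ℂ} (hs : 0 < s.re) :
    ∫ u in Ioi (0 : ℝ), ((u ^ (a - 1) : ℝ) : ℂ) * cexp (-(s * u)) =
      Real.Gamma a * s ^ (-(a : ℂ)) := by
  set μ : Measure ℝ := (volume.restrict (Ioi 0)).withDensity
    (fun u : ℝ => ENNReal.ofReal (u ^ (a - 1))) with hμ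
  have hmeas : Measurable (fun u : ℝ => ENNReal.ofReal (u ^ (a - 1))) := by fun_prop
  have hset : Iio (0 : ℝ) ⊆ interior (integrableExpSet id μ) := by
    refine interior_maximal ?_ isOpen_Iio
    intro x hx
    have hx' : x < 0 := hx
    change Integrable _ _
    rw [hμ, integrable_withDensity_iff_integrable_smul' hmeas (by simp)]
    refine (integrableOn_rpow_mul_exp ha (neg_pos.2 hx')).congr_fun ?_ measurableSet_Ioi
    intro u hu
    have : 0 ≤ u ^ (a - 1) := Real.rpow_nonneg (le_of_lt hu) _
    simp [ENNReal.toReal_ofReal this]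
  have hmgf : ∀ z : ℂ, complexMGF id μ z =
      ∫ u in Ioi (0 : ℝ), ((u ^ (a - 1) : ℝ) : ℂ) * cexp (z * u) := by
    intro z
    rw [complexMGF, hμ, integral_withDensity_eq_integral_toReal_smul hmeas (by simp)]
    refine setIntegral_congr_fun measurableSet_Ioi ?_
    intro u hu
    have : 0 ≤ u ^ (a - 1) := Real.rpow_nonneg (le_of_lt hu) _
    simp [ENNReal.toReal_ofReal this]
  set U : Set ℂ := {z | 0 < z.re} with hU
  have hUo : IsOpen U := isOpen_lt continuous_const continuous_re
  have hf : AnalyticOnNhd ℂ (fun z : ℂ => complexMGF id μ (-z)) U := by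
    intro z hz
    have h1 : AnalyticAt ℂ (complexMGF id μ) (-z) :=
      analyticAt_complexMGF (hset (by simpa [hU] using hz))
    exact h1.comp_of_eq (analyticAt_id.neg) rfl
  have hg : AnalyticOnNhd ℂ (fun z : ℂ => (Real.Gamma a : ℂ) * z ^ (-(a : ℂ))) U := by
    intro z hz
    exact analyticAt_const.mul (analyticAt_id.cpow analyticAt_const (Or.inl hz))
  have hfreq : ∃ᶠ z in 𝓝[≠] (1 : ℂ),
      complexMGF id μ (-z) = (Real.Gamma a : ℂ) * z ^ (-(a : ℂ)) := by
    have ht : Tendsto (fun x : ℝ => (x : ℂ)) (𝓝[≠] 1) (𝓝[≠] (1 : ℂ)) := by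
      refine tendsto_nhdsWithin_iff.2 ⟨?_, ?_⟩
      · exact (continuous_ofReal.tendsto' 1 1 (by simp)).mono_left nhdsWithin_le_nhds
      · filter_upwards [self_mem_nhdsWithin] with x hx
        simpa using hx
    refine ht.frequently (Eventually.frequently ?_)
    filter_upwards [nhdsWithin_le_nhds (Ioi_mem_nhds (zero_lt_one (α := ℝ)))] with x hx
    have hx' : 0 < x := hx
    rw [hmgf]
    have := Complex.integral_cpow_mul_exp_neg_mul_Ioi (a := a) (by simpa using ha) hx'
    rw [one_div, inv_cpow _ _ (by rw [arg_ofReal_of_nonneg hx'.le]; exact Real.pi_pos.ne),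
      ← cpow_neg, Complex.Gamma_ofReal, mul_comm] at this
    rw [← this]
    refine setIntegral_congr_fun measurableSet_Ioi ?_
    intro u hu
    have hu' : (0 : ℝ) < u := hu
    simp only
    rw [ofReal_cpow hu'.le]
    simp
  have := hf.eqOn_of_preconnected_of_frequently_eq hg
    (convex_halfSpace_re_gt 0).isPreconnected (z₀ := 1) (by simp [hU]) hfreq hs
  simp only [hmgf] at this
  simpa using this

lemma one_add_sq_le_norm_sq {c : ℝ} (hc : 1 ≤ c) (w : ℝ) : 1 + w ^ 2 ≤ ‖(c + w * I : ℂ)‖ ^ 2 := by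
  rw [Complex.sq_norm, normSq_add_mul_I]
  nlinarith

/-- The exponent is at least `2` and `‖s‖ ^ 2 ≥ 1 + w ^ 2 ≥ 1` on the line. -/
lemma integrable_cpow_line {a c : ℝ} (ha : 2 ≤ a) (hc : 1 ≤ c) :
    Integrable (fun w : ℝ => (c + w * I : ℂ) ^ (-(a : ℂ))) := by
  refine integrable_inv_one_add_sq.mono' ?_ (Eventually.of_forall fun w => ?_)
  · refine Continuous.aestronglyMeasurable ?_
    refine Continuous.cpow (by fun_prop) continuous_const fun w => Or.inl ?_
    simp; linarith
  · have h1 := one_add_sq_le_norm_sq hc w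
    have h2 : 1 ≤ ‖(c + w * I : ℂ)‖ := by
      nlinarith [norm_nonneg (c + w * I : ℂ), sq_nonneg w]
    rw [← ofReal_neg, norm_cpow_real, Real.rpow_neg (norm_nonneg _)]
    refine inv_anti₀ (by positivity) (h1.trans ?_)
    rw [← Real.rpow_natCast]
    exact Real.rpow_le_rpow_of_exponent_le h2 (by simpa using ha)

/-- The inverse Laplace transform of `s ^ (-a)` is `t ^ (a - 1) / Γ(a)`, by Fourier inversion for
`u ↦ u₊ ^ (a - 1) e^{-cu}`. -/
lemma inverse_laplace {a c t : ℝ} (ha : 2 ≤ a) (hc : 1 ≤ c) (ht : 0 < t) :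
    ∫ w : ℝ, cexp ((c + w * I) * t) * (c + w * I : ℂ) ^ (-(a : ℂ)) =
      2 * Real.pi * ((t ^ (a - 1) / Real.Gamma a : ℝ) : ℂ) := by
  have hΓ : 0 < Real.Gamma a := Real.Gamma_pos_of_pos (by linarith)
  have hpi := Real.pi_pos
  -- `max u 0` makes `f` vanish for `u ≤ 0`, since `0 ^ (a - 1) = 0`.
  let f : ℝ → ℂ := fun u => (((max u 0) ^ (a - 1) * Real.exp (-(c * u)) : ℝ) : ℂ)
  have hfc : Continuous f := by
    refine continuous_ofReal.comp (Continuous.mul ?_ (by fun_prop))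
    exact Continuous.rpow_const (by fun_prop) fun u => Or.inr (by linarith)
  have hsupp : Function.support f ⊆ Ioi 0 := by
    intro u hu
    by_contra h
    refine hu ?_
    have : max u 0 = 0 := max_eq_right (not_lt.1 h)
    simp [f, this, Real.zero_rpow (show a - 1 ≠ 0 by linarith)]
  have hfi : Integrable f := by
    rw [← integrableOn_iff_integrable_of_support_subset hsupp]
    have h : IntegrableOn
        (fun u : ℝ => ((u ^ (a - 1) * Real.exp (-(c * u)) : ℝ) : ℂ)) (Ioi 0) :=
      (integrableOn_rpow_mul_exp (by linarith) (by linarith)).ofReal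
    refine h.congr_fun ?_ measurableSet_Ioi
    intro u hu
    simp [f, max_eq_left (le_of_lt (show (0 : ℝ) < u from hu))]
  have hF : FourierTransform.fourier f =
      fun ξ : ℝ => (Real.Gamma a : ℂ) * (c + (2 * Real.pi * ξ : ℝ) * I : ℂ) ^ (-(a : ℂ)) := by
    ext ξ
    rw [Real.fourier_real_eq_integral_exp_smul,
      ← laplace_rpow (by linarith) (by simp; linarith),
      ← setIntegral_eq_integral_of_forall_compl_eq_zero (s := Ioi 0)]
    · refine setIntegral_congr_fun measurableSet_Ioi ?_
      intro u hu
      simp only [f, max_eq_left (le_of_lt (show (0 : ℝ) < u from hu)), smul_eq_mul, ofReal_mul,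
        ofReal_exp]
      rw [mul_left_comm, ← Complex.exp_add]
      congr 2
      push_cast
      ring
    · intro u hu
      have : f u = 0 := by
        by_contra h
        exact hu (hsupp h)
      rw [this, smul_zero]
  have hline := integrable_cpow_line ha hc
  have hFi : Integrable (FourierTransform.fourier f) := by
    rw [hF]
    exact (hline.comp_mul_left' (R := 2 * Real.pi) (by positivity)).const_mul _
  have hinv := congrFun (hfc.fourierInv_fourier_eq hfi hFi) t
  rw [Real.fourierInv_eq', hF] at hinv
  -- Passage from the frequency `ξ` of Mathlib's Fourier transform to `w = 2 π ξ`.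
  have hsub := Measure.integral_comp_mul_left
    (fun w : ℝ => cexp ((c + w * I) * t) * (c + w * I : ℂ) ^ (-(a : ℂ))) (2 * Real.pi)
  have hft : f t = ((t ^ (a - 1) : ℝ) : ℂ) * cexp (-(c * t)) := by
    simp only [f, max_eq_left ht.le]
    push_cast
    rfl
  have hcomb : ∫ ξ : ℝ, cexp ((c + (2 * Real.pi * ξ : ℝ) * I) * t) *
      (c + (2 * Real.pi * ξ : ℝ) * I : ℂ) ^ (-(a : ℂ)) =
      ((t ^ (a - 1) : ℝ) : ℂ) / Real.Gamma a := by
    have : ((t ^ (a - 1) : ℝ) : ℂ) / Real.Gamma a = cexp (c * t) / Real.Gamma a * f t := by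
      rw [hft]
      have : cexp (c * t) * cexp (-(c * t)) = 1 := by rw [← Complex.exp_add]; simp
      linear_combination (-((t ^ (a - 1) : ℝ) : ℂ) / Real.Gamma a) * this
    rw [this, ← hinv, ← integral_const_mul]
    congr 1
    ext ξ
    have h1 : (c + (2 * Real.pi * ξ : ℝ) * I) * t =
        c * t + ((2 * Real.pi * inner ℝ ξ t : ℝ) : ℂ) * I := by
      simp
      ring
    have h2 : (Real.Gamma a : ℂ) ≠ 0 := by exact_mod_cast hΓ.ne'
    rw [h1, Complex.exp_add, smul_eq_mul]
    field_simp
  rw [hcomb, abs_of_pos (by positivity), real_smul] at hsub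
  have h3 : (Real.pi : ℂ) ≠ 0 := by exact_mod_cast hpi.ne'
  push_cast at hsub ⊢
  rw [hsub, mul_inv_cancel_left₀ (by simp [h3])]

/-! ### The kernel in the right half-plane -/

/-- The Laplace transform `ρ s ^ (ρ - 1) / (1 + s ^ ρ) ^ 2` of the function
`t ↦ t ^ ρ * E_{ρ,ρ}(-t ^ ρ)`, with the principal branch of the powers. -/
noncomputable def mlKernel (ρ : ℝ) (s : ℂ) : ℂ := ρ * s ^ ((ρ : ℂ) - 1) / (1 + s ^ (ρ : ℂ)) ^ 2

/-- On the right half-plane the argument of `s ^ ρ` stays within `π ρ / 2 < π`, so `s ^ ρ` keeps away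
from `-1`. Quantitatively, `|1 + R e^{2iθ}|² = (1 + R)² cos² θ + (1 - R)² sin² θ`. -/
lemma norm_one_add_cpow_ge {ρ : ℝ} (hρ₁ : 1 < ρ) (hρ₂ : ρ < 2) {s : ℂ} (hs : 0 < s.re) :
    Real.cos (Real.pi * ρ / 4) * (1 + ‖s‖ ^ ρ) ≤ ‖1 + s ^ (ρ : ℂ)‖ := by
  have hpi := Real.pi_pos
  have hs0 : s ≠ 0 := by rintro rfl; simp at hs
  have hr : 0 < ‖s‖ := norm_pos_iff.2 hs0
  set θ : ℝ := s.arg * ρ / 2 with hθ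
  set R : ℝ := ‖s‖ ^ ρ with hR
  have hRpos : 0 < R := Real.rpow_pos_of_pos hr _
  have hc0 : 0 < Real.cos (Real.pi * ρ / 4) :=
    Real.cos_pos_of_mem_Ioo ⟨by nlinarith, by nlinarith⟩
  have hθabs : |θ| ≤ Real.pi * ρ / 4 := by
    have := abs_arg_lt_pi_div_two_iff.2 (Or.inl hs)
    rw [hθ, abs_div, abs_mul, abs_of_pos (show 0 < ρ by linarith), abs_of_pos (zero_lt_two (α := ℝ))]
    nlinarith
  have hcos : Real.cos (Real.pi * ρ / 4) ≤ Real.cos θ := by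
    rw [← Real.cos_abs θ]
    exact Real.cos_le_cos_of_nonneg_of_le_pi (abs_nonneg _) (by nlinarith) hθabs
  have hre : s ^ (ρ : ℂ) = (R * Real.cos (2 * θ) : ℝ) + (R * Real.sin (2 * θ) : ℝ) * I := by
    rw [cpow_ofReal]
    rw [show s.arg * ρ = 2 * θ by rw [hθ]; ring]
    push_cast
    ring
  have hsq : ‖1 + s ^ (ρ : ℂ)‖ ^ 2 =
      (1 + R) ^ 2 * Real.cos θ ^ 2 + (1 - R) ^ 2 * Real.sin θ ^ 2 := by
    rw [hre, ← add_assoc, ← ofReal_one, ← ofReal_add, Complex.sq_norm, normSq_add_mul_I,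
      Real.cos_two_mul, Real.sin_two_mul]
    have := Real.sin_sq_add_cos_sq θ
    have h2 : Real.sin θ ^ 2 = 1 - Real.cos θ ^ 2 := by linarith
    linear_combination (4 * R ^ 2 * Real.cos θ ^ 2 - (1 - R) ^ 2) * h2
  refine le_of_sq_le_sq ?_ (norm_nonneg _)
  rw [hsq, mul_pow]
  have h3 := pow_le_pow_left₀ hc0.le hcos 2
  nlinarith [mul_nonneg (sq_nonneg (1 - R)) (sq_nonneg (Real.sin θ)),
    mul_le_mul_of_nonneg_left h3 (sq_nonneg (1 + R))]

lemma one_add_cpow_ne_zero {ρ : ℝ} (hρ₁ : 1 < ρ) (hρ₂ : ρ < 2) {s : ℂ} (hs : 0 < s.re) :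
    1 + s ^ (ρ : ℂ) ≠ 0 := by
  have hpi := Real.pi_pos
  have hc0 : 0 < Real.cos (Real.pi * ρ / 4) :=
    Real.cos_pos_of_mem_Ioo ⟨by nlinarith, by nlinarith⟩
  rw [← norm_pos_iff]
  refine lt_of_lt_of_le ?_ (norm_one_add_cpow_ge hρ₁ hρ₂ hs)
  positivity

/-- A bound for the kernel that is integrable along vertical lines, uniformly over all lines in the
open right half-plane. -/
lemma exists_norm_mlKernel_le {ρ : ℝ} (hρ₁ : 1 < ρ) (hρ₂ : ρ < 2) :
    ∃ K : ℝ, 0 < K ∧ ∀ s : ℂ, 0 < s.re → ‖mlKernel ρ s‖ ≤ K * (1 + s.im ^ 2)⁻¹ := by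
  have hpi := Real.pi_pos
  set c := Real.cos (Real.pi * ρ / 4)
  have hc0 : 0 < c := Real.cos_pos_of_mem_Ioo ⟨by nlinarith, by nlinarith⟩
  refine ⟨2 * ρ / c ^ 2, by positivity, fun s hs => ?_⟩
  have hs0 : s ≠ 0 := by rintro rfl; simp at hs
  have hr : 0 < ‖s‖ := norm_pos_iff.2 hs0
  set r := ‖s‖
  have hnum : ‖s ^ ((ρ : ℂ) - 1)‖ = r ^ (ρ - 1) := by
    rw [← norm_cpow_real]; push_cast; rfl
  have hlow := norm_one_add_cpow_ge hρ₁ hρ₂ hs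
  have hR : 0 < r ^ ρ := Real.rpow_pos_of_pos hr _
  have hq : 0 < r ^ (ρ - 1) := Real.rpow_pos_of_pos hr _
  -- For `r ≤ 1` the left side is at most `2` and the right side at least `2`. For `r ≥ 1` the left
  -- side is at most `2 r ^ (ρ + 1)`, and `ρ + 1 ≤ 2 ρ`.
  have hkey : r ^ (ρ - 1) * (1 + r ^ 2) ≤ 2 * (1 + r ^ ρ) ^ 2 := by
    rcases le_total r 1 with h | h
    · have h1 : r ^ (ρ - 1) ≤ 1 := Real.rpow_le_one hr.le h (by linarith)
      nlinarith
    · have h1 : r ^ (ρ - 1) * r = r ^ ρ := by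
        rw [← Real.rpow_add_one hr.ne']; ring_nf
      have h2 : r ≤ r ^ ρ := by
        simpa using Real.rpow_le_rpow_of_exponent_le h hρ₁.le
      nlinarith [mul_le_mul_of_nonneg_left h2 hR.le, mul_le_mul_of_nonneg_left h hq.le]
  have him : s.im ^ 2 ≤ r ^ 2 := by
    rw [← sq_abs s.im]
    exact pow_le_pow_left₀ (abs_nonneg _) (abs_im_le_norm s) 2
  rw [mlKernel, norm_div, norm_mul, norm_pow, hnum, norm_real, Real.norm_of_nonneg (by linarith),
    ← div_eq_mul_inv, div_div, div_le_div_iff₀ (lt_of_lt_of_le (by positivity)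
      (pow_le_pow_left₀ (by positivity) hlow 2)) (by positivity)]
  have hlow2 := pow_le_pow_left₀ (by positivity) hlow 2
  calc ρ * r ^ (ρ - 1) * (c ^ 2 * (1 + s.im ^ 2))
      ≤ ρ * r ^ (ρ - 1) * (c ^ 2 * (1 + r ^ 2)) := by gcongr
    _ = ρ * c ^ 2 * (r ^ (ρ - 1) * (1 + r ^ 2)) := by ring
    _ ≤ ρ * c ^ 2 * (2 * (1 + r ^ ρ) ^ 2) := by gcongr
    _ = 2 * ρ * (c * (1 + r ^ ρ)) ^ 2 := by ring
    _ ≤ 2 * ρ * ‖1 + s ^ (ρ : ℂ)‖ ^ 2 := by gcongr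

lemma differentiableAt_mlKernel {ρ : ℝ} (hρ₁ : 1 < ρ) (hρ₂ : ρ < 2) {s : ℂ} (hs : 0 < s.re) :
    DifferentiableAt ℂ (mlKernel ρ) s := by
  have h : s ∈ slitPlane := Or.inl hs
  unfold mlKernel
  refine DifferentiableAt.div ?_ ?_ (pow_ne_zero 2 (one_add_cpow_ne_zero hρ₁ hρ₂ hs))
  · exact (differentiableAt_id.cpow_const h).const_mul _
  · exact ((differentiableAt_id.cpow_const h).const_add _).pow 2

/-! ### The Bromwich integral -/

/-- The integrand `w ↦ e^{st} mlKernel ρ s` of the inverse Laplace (Bromwich) integral over the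
vertical line `s = c + i w`; the factor `1 / (2π)` is left out. -/
noncomputable def lineIntegrand (ρ t c w : ℝ) : ℂ :=
  cexp ((c + w * I) * t) * mlKernel ρ (c + w * I)

lemma integrable_lineIntegrand {ρ t c : ℝ} (hρ₁ : 1 < ρ) (hρ₂ : ρ < 2) (hc : 0 < c) :
    Integrable (lineIntegrand ρ t c) := by
  obtain ⟨K, hK, hb⟩ := exists_norm_mlKernel_le hρ₁ hρ₂
  refine (integrable_inv_one_add_sq.const_mul (Real.exp (c * t) * K)).mono' ?_
    (Eventually.of_forall fun w => ?_)
  · refine Continuous.aestronglyMeasurable ?_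
    refine Continuous.mul (by fun_prop) (continuous_iff_continuousAt.2 fun w => ?_)
    refine ContinuousAt.comp (g := mlKernel ρ)
      (differentiableAt_mlKernel hρ₁ hρ₂ (by simpa using hc)).continuousAt ?_
    fun_prop
  · have := hb (c + w * I) (by simpa using hc)
    rw [lineIntegrand, norm_mul, norm_exp, mul_assoc]
    simp at this ⊢
    gcongr

/-- The Bromwich integral does not depend on the line: Cauchy's theorem on the rectangle
`[c₁, c₂] × [-T, T]`, whose horizontal sides contribute `O(1 / (1 + T²))`. -/
lemma integral_line_eq {ρ t c₁ c₂ : ℝ} (hρ₁ : 1 < ρ) (hρ₂ : ρ < 2) (ht : 0 < t) (h₁ : 0 < c₁)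
    (h₁₂ : c₁ ≤ c₂) :
    ∫ w, lineIntegrand ρ t c₁ w = ∫ w, lineIntegrand ρ t c₂ w := by
  obtain ⟨K, hK, hb⟩ := exists_norm_mlKernel_le hρ₁ hρ₂
  let f : ℂ → ℂ := fun s => cexp (s * t) * mlKernel ρ s
  have hT : ∀ T : ℝ, ‖∫ x in c₁..c₂, f (x + T * I)‖ ≤
      Real.exp (c₂ * t) * (K * (1 + T ^ 2)⁻¹) * |c₂ - c₁| := by
    intro T
    refine intervalIntegral.norm_integral_le_of_norm_le_const fun x hx => ?_
    rw [uIoc_of_le h₁₂] at hx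
    have := hb (x + T * I) (by simpa using h₁.trans hx.1)
    simp only [f]
    rw [norm_mul, norm_exp]
    simp at this ⊢
    have hx2 := hx.2
    gcongr
  have hlim0 : Tendsto (fun T : ℝ => Real.exp (c₂ * t) * (K * (1 + T ^ 2)⁻¹) * |c₂ - c₁|)
      atTop (𝓝 0) := by
    have : Tendsto (fun T : ℝ => (1 + T ^ 2)⁻¹) atTop (𝓝 0) :=
      tendsto_inv_atTop_zero.comp
        (tendsto_atTop_add_const_left _ _ (tendsto_pow_atTop two_ne_zero))
    simpa using ((this.const_mul K).const_mul (Real.exp (c₂ * t))).mul_const |c₂ - c₁|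
  have htop : Tendsto (fun T : ℝ => ∫ x in c₁..c₂, f (x + T * I)) atTop (𝓝 0) :=
    squeeze_zero_norm hT hlim0
  have hbot : Tendsto (fun T : ℝ => ∫ x in c₁..c₂, f (x + (-T : ℝ) * I)) atTop (𝓝 0) :=
    squeeze_zero_norm (fun T => by simpa using hT (-T)) hlim0
  have hside : ∀ c : ℝ, 0 < c → Tendsto (fun T : ℝ => ∫ w in (-T)..T, f (c + w * I)) atTop
      (𝓝 (∫ w, lineIntegrand ρ t c w)) := fun c hc =>
    intervalIntegral_tendsto_integral (integrable_lineIntegrand hρ₁ hρ₂ hc)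
      tendsto_neg_atTop_atBot tendsto_id
  have hrect : ∀ T : ℝ, (((∫ x in c₁..c₂, f (x + (-T : ℝ) * I)) - ∫ x in c₁..c₂, f (x + T * I)) +
      I • ∫ w in (-T)..T, f (c₂ + w * I)) - I • ∫ w in (-T)..T, f (c₁ + w * I) = 0 := by
    intro T
    have := Complex.integral_boundary_rect_eq_zero_of_differentiableOn f
      (c₁ + (-T : ℝ) * I) (c₂ + T * I) ?_
    · simpa using this
    · intro s hs
      have hs' : 0 < s.re := by
        have := hs.1
        simp [uIcc_of_le h₁₂] at this
        linarith [this.1]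
      refine DifferentiableAt.differentiableWithinAt ?_
      exact (by fun_prop : DifferentiableAt ℂ (fun s : ℂ => cexp (s * t)) s).mul
        (differentiableAt_mlKernel hρ₁ hρ₂ hs')
  have hlim := (((hbot.sub htop).add ((hside c₂ (h₁.trans_le h₁₂)).const_smul I)).sub
    ((hside c₁ h₁).const_smul I))
  have := tendsto_nhds_unique hlim (tendsto_const_nhds.congr fun T => (hrect T).symm)
  rw [sub_zero, zero_add, ← smul_sub, smul_eq_zero] at this
  exact (sub_eq_zero.1 (this.resolve_left I_ne_zero)).symm

/-- Moving the line `Re s = 2` to `Re s = min 2 t⁻¹` makes `|e^{st}|` bounded independently of `t`. -/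
lemma exists_integral_line_le {ρ : ℝ} (hρ₁ : 1 < ρ) (hρ₂ : ρ < 2) :
    ∃ C : ℝ, 0 < C ∧ ∀ t : ℝ, 0 < t → ‖∫ w, lineIntegrand ρ t 2 w‖ ≤ C := by
  obtain ⟨K, hK, hb⟩ := exists_norm_mlKernel_le hρ₁ hρ₂
  have hpi := Real.pi_pos
  refine ⟨Real.exp 2 * K * Real.pi, by positivity, fun t ht => ?_⟩
  have hc : 0 < min 2 t⁻¹ := lt_min two_pos (inv_pos.2 ht)
  rw [← integral_line_eq hρ₁ hρ₂ ht hc (min_le_left _ _)]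
  refine (norm_integral_le_of_norm_le
    (integrable_inv_one_add_sq.const_mul (Real.exp 2 * K))
    (Eventually.of_forall fun w => ?_)).trans_eq ?_
  · have := hb ((min 2 t⁻¹ : ℝ) + w * I) (by simpa using ht)
    rw [lineIntegrand, norm_mul, norm_exp, mul_assoc]
    have h1 : (min 2 t⁻¹) * t ≤ 2 := by
      have := mul_le_mul_of_nonneg_right (min_le_right 2 t⁻¹) ht.le
      rw [inv_mul_cancel₀ ht.ne'] at this
      linarith
    have h2 : ((((min 2 t⁻¹ : ℝ) : ℂ) + w * I) * t).re = min 2 t⁻¹ * t := by simp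
    have h3 : (((min 2 t⁻¹ : ℝ) : ℂ) + w * I).im = w := by simp
    rw [h3] at this
    rw [h2]
    gcongr
  · rw [integral_const_mul, integral_univ_inv_one_add_sq]

/-- Expansion of the kernel at infinity: `mlKernel ρ s = -(ρ / s) q / (1 - q) ^ 2` with
`q = -s ^ (-ρ)`, and `q / (1 - q) ^ 2 = ∑ n q ^ n`, whose `n = 0` term vanishes. -/
lemma hasSum_mlKernel {ρ : ℝ} (hρ₁ : 1 < ρ) (hρ₂ : ρ < 2) {s : ℂ} (hs : 2 ≤ s.re) :
    HasSum (fun k : ℕ => (-1 : ℂ) ^ k * (ρ * (k + 1)) *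
      s ^ (-((ρ * ((k : ℝ) + 1) + 1 : ℝ) : ℂ))) (mlKernel ρ s) := by
  have hs0 : s ≠ 0 := by rintro rfl; simp at hs; linarith
  have hn : 2 ≤ ‖s‖ := hs.trans (re_le_norm s)
  set q : ℂ := -s ^ (-(ρ : ℂ)) with hq
  have hq1 : ‖q‖ < 1 := by
    rw [hq, norm_neg, ← ofReal_neg, norm_cpow_real]
    exact Real.rpow_lt_one_of_one_lt_of_neg (by linarith) (by linarith)
  have h0 := hasSum_coe_mul_geometric_of_norm_lt_one hq1
  have h1 := ((hasSum_nat_add_iff' 1).2 h0).mul_left (-(ρ * s⁻¹))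
  have hne : s ^ (ρ : ℂ) ≠ 0 := by simp [cpow_eq_zero_iff, hs0]
  have hne2 := one_add_cpow_ne_zero hρ₁ hρ₂ (show 0 < s.re by linarith)
  have hval : mlKernel ρ s = -(ρ * s⁻¹) *
      (q / (1 - q) ^ 2 - ∑ i ∈ Finset.range 1, (i : ℂ) * q ^ i) := by
    rw [mlKernel, hq, cpow_neg, cpow_sub _ _ hs0, cpow_one]
    have hne3 : s ^ (ρ : ℂ) + 1 ≠ 0 := by rwa [add_comm]
    have hne4 : 1 - -(s ^ (ρ : ℂ))⁻¹ ≠ 0 := by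
      rw [sub_neg_eq_add]
      intro h
      apply hne3
      have := congrArg (· * s ^ (ρ : ℂ)) h
      simpa [add_mul, hne, add_comm] using this
    simp
    field_simp
    ring
  rw [hval]
  have hterm : ∀ k : ℕ, (-1 : ℂ) ^ k * (ρ * (k + 1)) * s ^ (-((ρ * ((k : ℝ) + 1) + 1 : ℝ) : ℂ)) =
      -(ρ * s⁻¹) * (((k + 1 : ℕ) : ℂ) * q ^ (k + 1)) := by
    intro k
    have : s ^ (-((ρ * ((k : ℝ) + 1) + 1 : ℝ) : ℂ)) = (s ^ (-(ρ : ℂ))) ^ (k + 1) * s⁻¹ := by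
      rw [← cpow_nat_mul, ← cpow_neg_one, ← cpow_add _ _ hs0]
      congr 1
      push_cast
      ring
    rw [this, hq, neg_pow (s ^ (-(ρ : ℂ)))]
    push_cast
    ring
  simpa only [hterm] using h1

/-- Termwise inversion of the expansion of the kernel on the line `Re s = 2`: up to the factor `2π`,
the Bromwich integral is `t ^ ρ * E_{ρ,ρ}(-t ^ ρ)`. The `k`-th term uses
`Γ(ρ(k+1)+1) = ρ(k+1) Γ(ρ(k+1))`. -/
lemma hasSum_mittagLeffler {ρ t : ℝ} (hρ₁ : 1 < ρ) (hρ₂ : ρ < 2) (ht : 0 < t) :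
    HasSum (fun k : ℕ => (2 * Real.pi * (t ^ ρ : ℝ) : ℂ) *
      (((-t ^ ρ) ^ k / Real.Gamma (ρ * (k + 1)) : ℝ) : ℂ)) (∫ w, lineIntegrand ρ t 2 w) := by
  let F : ℕ → ℝ → ℂ := fun k w => cexp (((2 : ℝ) + w * I) * t) *
    ((-1 : ℂ) ^ k * (ρ * (k + 1)) * ((2 : ℝ) + w * I : ℂ) ^ (-((ρ * ((k : ℝ) + 1) + 1 : ℝ) : ℂ)))
  have hgeo : Summable fun k : ℕ => ((k : ℝ) + 1) * (1 / 2) ^ k := by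
    have h1 := (hasSum_coe_mul_geometric_of_norm_lt_one
      (show ‖(1 / 2 : ℝ)‖ < 1 by norm_num)).summable
    have h2 : Summable fun k : ℕ => (1 / 2 : ℝ) ^ k := summable_geometric_two
    simpa [add_mul] using h1.add h2
  let A : ℝ := Real.exp (2 * t) * ρ
  have hmain : HasSum (fun k => ∫ w, F k w) (∫ w, lineIntegrand ρ t 2 w) := by
    refine hasSum_integral_of_dominated_convergence
      -- On the line, `|s|` is at least `2`, hence `|s| ^ (-(ρ(k+1)+1)) ≤ 2 ^ (-k) |s| ^ (-2)`.
      (fun k w => (((k : ℝ) + 1) * (1 / 2) ^ k) * (A * (1 + w ^ 2)⁻¹)) ?_ ?_ ?_ ?_ ?_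
    · intro k
      refine Continuous.aestronglyMeasurable ?_
      refine Continuous.mul (by fun_prop) (Continuous.mul (by fun_prop) ?_)
      exact Continuous.cpow (by fun_prop) continuous_const fun w => Or.inl (by simp)
    · intro k
      refine Eventually.of_forall fun w => ?_
      have h1 := one_add_sq_le_norm_sq (c := 2) (by norm_num) w
      have h2 : 2 ≤ ‖((2 : ℝ) + w * I : ℂ)‖ := by
        simpa using re_le_norm ((2 : ℝ) + w * I : ℂ)
      have h3 : ‖((2 : ℝ) + w * I : ℂ) ^ (-((ρ * ((k : ℝ) + 1) + 1 : ℝ) : ℂ))‖ ≤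
          (1 / 2) ^ k * (1 + w ^ 2)⁻¹ := by
        rw [← ofReal_neg, norm_cpow_real, Real.rpow_neg (norm_nonneg _), one_div, inv_pow,
          ← mul_inv]
        refine inv_anti₀ (by positivity) ?_
        set N := ‖((2 : ℝ) + w * I : ℂ)‖
        calc (2 : ℝ) ^ k * (1 + w ^ 2) ≤ N ^ k * N ^ 2 := by gcongr
          _ = N ^ ((k + 2 : ℕ) : ℝ) := by rw [Real.rpow_natCast, pow_add]
          _ ≤ _ := by
            refine Real.rpow_le_rpow_of_exponent_le (by linarith) ?_
            push_cast
            nlinarith [(Nat.cast_nonneg k : (0 : ℝ) ≤ k)]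
      have h4 : ‖(ρ * (k + 1) : ℂ)‖ = ρ * (k + 1) := by
        rw [← Nat.cast_one (R := ℂ), ← Nat.cast_add, norm_mul, norm_real, Complex.norm_natCast,
          Real.norm_of_nonneg (by linarith)]
        simp
      simp only [F, norm_mul, norm_exp, norm_pow, norm_neg, norm_one, one_pow, one_mul]
      rw [← norm_mul (ρ : ℂ), h4]
      have h5 : (((2 : ℝ) + w * I : ℂ) * t).re = 2 * t := by simp
      rw [h5]
      calc _ ≤ Real.exp (2 * t) * (ρ * (k + 1) * ((1 / 2) ^ k * (1 + w ^ 2)⁻¹)) := by gcongr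
        _ = _ := by simp only [A]; ring
    · exact Eventually.of_forall fun w => hgeo.mul_right _
    · simp_rw [tsum_mul_right]
      exact (integrable_inv_one_add_sq.const_mul A).const_mul _
    · refine Eventually.of_forall fun w => ?_
      exact (hasSum_mlKernel hρ₁ hρ₂ (by simp)).mul_left _
  convert hmain using 1
  ext k
  have hk : 0 < ρ * (k + 1) := by positivity
  have hk' : 1 ≤ ρ * (k + 1) := by nlinarith [(Nat.cast_nonneg k : (0 : ℝ) ≤ k)]
  have h1 := inverse_laplace (a := ρ * (k + 1) + 1) (c := 2) (t := t) (by linarith)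
    (by norm_num) ht
  have h2 : ∫ w, F k w = ((-1 : ℂ) ^ k * (ρ * (k + 1))) * ∫ w : ℝ, cexp (((2 : ℝ) + w * I) * t) *
      ((2 : ℝ) + w * I : ℂ) ^ (-((ρ * ((k : ℝ) + 1) + 1 : ℝ) : ℂ)) := by
    rw [← integral_const_mul]
    congr 1
    ext w
    simp only [F]
    ring
  rw [h2, h1, Real.Gamma_add_one hk.ne', add_sub_cancel_right]
  have hΓ : Real.Gamma (ρ * (k + 1)) ≠ 0 := (Real.Gamma_pos_of_pos hk).ne'
  have h3 : t ^ (ρ * (k + 1)) = (t ^ ρ) ^ k * t ^ ρ := by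
    rw [Real.rpow_mul ht.le, ← pow_succ, ← Real.rpow_natCast]
    push_cast
    rfl
  have h4 : (-1) ^ k * (ρ * (k + 1)) *
      (t ^ (ρ * (k + 1)) / (ρ * (k + 1) * Real.Gamma (ρ * (k + 1)))) =
      t ^ ρ * ((-t ^ ρ) ^ k / Real.Gamma (ρ * (k + 1))) := by
    rw [h3, neg_pow (t ^ ρ)]
    field_simp
  have h5 := congrArg (fun x : ℝ => (2 * Real.pi : ℂ) * (x : ℂ)) h4
  push_cast at h5 ⊢
  linear_combination -h5

/-- For `1 < ρ < 2` there is a constant `M₂ > 0`, depending only on `ρ`, such that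
`|E_{ρ,ρ}(−x)| ≤ M₂/(1 + x)` for all `x > 0`. -/
theorem mittagLeffler2_global_bound (ρ : ℝ) (hρ₁ : 1 < ρ) (hρ₂ : ρ < 2) :
    ∃ M₂ : ℝ, 0 < M₂ ∧ ∀ x : ℝ, 0 < x →
      |mittagLeffler2 ρ (-x)| ≤ M₂ / (1 + x) := by
  obtain ⟨C, hC, hbound⟩ := exists_integral_line_le hρ₁ hρ₂
  have hpi := Real.pi_gt_three
  have hΓ : ∀ k : ℕ, 0 < Real.Gamma (ρ * (k + 1)) := fun k =>
    Real.Gamma_pos_of_pos (by positivity)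
  -- The expansion at `t = 1` is an alternating version of this series, and summability in `ℝ` is
  -- absolute.
  have hS : Summable fun k : ℕ => 1 / Real.Gamma (ρ * (k + 1)) := by
    have h := (hasSum_mittagLeffler hρ₁ hρ₂ one_pos).summable
    rw [summable_mul_left_iff (by simp)] at h
    have h2 := (Complex.summable_ofReal.1 h).abs
    refine h2.congr fun k => ?_
    rw [abs_div, abs_of_pos (hΓ k)]
    simp
  set S := ∑' k : ℕ, 1 / Real.Gamma (ρ * (k + 1)) with hSdef
  have hS0 : 0 ≤ S := tsum_nonneg fun k => (one_div_pos.2 (hΓ k)).le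
  have hlarge : ∀ x : ℝ, 0 < x → x * |mittagLeffler2 ρ (-x)| ≤ C := by
    intro x hx
    have ht : 0 < x ^ ρ⁻¹ := Real.rpow_pos_of_pos hx _
    have hxt : (x ^ ρ⁻¹) ^ ρ = x := Real.rpow_inv_rpow hx.le (by linarith)
    have h := hasSum_mittagLeffler hρ₁ hρ₂ ht
    have hb := hbound _ ht
    rw [← h.tsum_eq, tsum_mul_left, ← ofReal_tsum, hxt] at hb
    change ‖_ * ((mittagLeffler2 ρ (-x) : ℝ) : ℂ)‖ ≤ C at hb
    rw [norm_mul, norm_real, Real.norm_eq_abs] at hb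
    have h1 : ‖(2 * Real.pi * (x : ℂ) : ℂ)‖ = 2 * Real.pi * x := by
      simp [abs_of_pos hx, abs_of_pos Real.pi_pos]
    rw [h1] at hb
    nlinarith [mul_nonneg hx.le (abs_nonneg (mittagLeffler2 ρ (-x)))]
  have hsmall : ∀ x : ℝ, 0 < x → x ≤ 1 → |mittagLeffler2 ρ (-x)| ≤ S := by
    intro x hx hx1
    rw [mittagLeffler2, ← Real.norm_eq_abs]
    refine tsum_of_norm_bounded hS.hasSum fun k => ?_
    rw [norm_div, norm_pow, norm_neg, Real.norm_of_nonneg hx.le, Real.norm_of_nonneg (hΓ k).le]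
    have := hΓ k
    gcongr
    exact pow_le_one₀ hx.le hx1
  refine ⟨2 * (S + C), by positivity, fun x hx => ?_⟩
  rw [le_div_iff₀ (by positivity)]
  have h1 := hlarge x hx
  have h0 := abs_nonneg (mittagLeffler2 ρ (-x))
  rcases le_total x 1 with h | h
  · have h2 := hsmall x hx h
    nlinarith
  · nlinarith
end

section
/- Let 1 < ρ < 2. There exists a constant M > 0, depending only on ρ, such that for every α > 0 and every t > 0, α t^{ρ−1} · |E_{ρ,ρ}(−α t^ρ)| ≤ M · α^{1/ρ}. Equivalently, the derivative of t ↦ E_ρ(−α t^ρ) is bounded in absolute value by M α^{1/ρ}, uniformly in t > 0. -/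
namespace MLBound

open MeasureTheory Set Real

/-! ### Kernels of positive type -/


/-- On `[0, T]²` the quadratic form of a causal convolution kernel `k` is an integral over the whole
plane, with all truncations carried by indicator functions: the indicator of `Ioo 0 T` at `t - s`
encodes both `s < t` and the absence of any constraint beyond `s, t ∈ (0, T]`. -/
lemma quadForm_eq {u k : ℝ → ℝ} (hu : Continuous u) {T : ℝ} (hT : 0 ≤ T)
    (hk : IntegrableOn k (Ioo 0 T)) :
    Integrable (fun p : ℝ × ℝ ↦ (Ioc 0 T).indicator u p.1 *
      ((Ioc 0 T).indicator u p.2 * (Ioo 0 T).indicator k (p.1 - p.2))) (volume.prod volume) ∧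
    ∫ p : ℝ × ℝ, (Ioc 0 T).indicator u p.1 *
      ((Ioc 0 T).indicator u p.2 * (Ioo 0 T).indicator k (p.1 - p.2)) ∂(volume.prod volume)
      = ∫ t in 0..T, u t * ∫ s in 0..t, k (t - s) * u s := by
  have hw : Integrable ((Ioc 0 T).indicator u) :=
    (integrable_indicator_iff measurableSet_Ioc).2
      ((hu.continuousOn.integrableOn_Icc (a := 0) (b := T)).mono_set Ioc_subset_Icc_self)
  have hki : Integrable ((Ioo 0 T).indicator k) := (integrable_indicator_iff measurableSet_Ioo).2 hk
  have hint : Integrable (fun p : ℝ × ℝ ↦ (Ioc 0 T).indicator u p.1 *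
      ((Ioc 0 T).indicator u p.2 * (Ioo 0 T).indicator k (p.1 - p.2))) (volume.prod volume) := by
    obtain ⟨C, hC⟩ := (isCompact_Icc (a := (0:ℝ)) (b := T)).exists_bound_of_continuousOn
      hu.continuousOn
    have h1 := hw.convolution_integrand (ContinuousLinearMap.mul ℝ ℝ) hki
    refine h1.bdd_mul (c := max C 0) ?_ ?_
    · exact ((hu.measurable.indicator measurableSet_Ioc).comp measurable_fst).aestronglyMeasurable
    · refine Filter.Eventually.of_forall fun p ↦ ?_
      by_cases hp : p.1 ∈ Ioc 0 T
      · rw [indicator_of_mem hp]; exact (hC _ (Ioc_subset_Icc_self hp)).trans (le_max_left _ _)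
      · rw [indicator_of_notMem hp]; simp
  refine ⟨hint, ?_⟩
  rw [integral_prod _ hint, intervalIntegral.integral_of_le hT, ← integral_indicator measurableSet_Ioc]
  refine integral_congr_ae (Filter.Eventually.of_forall fun t ↦ ?_)
  simp only
  by_cases ht : t ∈ Ioc 0 T
  · rw [indicator_of_mem ht, integral_const_mul, indicator_of_mem ht,
      intervalIntegral.integral_of_le ht.1.le,
      integral_Ioc_eq_integral_Ioo, ← integral_indicator measurableSet_Ioo]
    congr 1
    refine integral_congr_ae (Filter.Eventually.of_forall fun s ↦ ?_)
    simp only [indicator_apply, mem_Ioc, mem_Ioo] at ht ⊢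
    by_cases hs : 0 < s ∧ s < t
    · rw [if_pos ⟨hs.1, by linarith⟩, if_pos ⟨by linarith, by linarith⟩, if_pos hs, mul_comm]
    · rw [if_neg hs]
      by_cases h0 : 0 < s
      · have : ¬ s < t := fun h ↦ hs ⟨h0, h⟩
        rw [if_neg (c := 0 < t - s ∧ _) (fun h ↦ this (by linarith [h.1])), mul_zero]
      · rw [if_neg (c := 0 < s ∧ _) (fun h ↦ h0 h.1), zero_mul]
  · simp [indicator_of_notMem ht]

/-- The kernel `exp (-l r)` is of positive type: `y t = ∫₀ᵗ exp (-l (t - s)) u s ds` solves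
`y' + l y = u`, so `u y` is the derivative of `y² / 2` plus the nonnegative term `l y²`. -/
lemma exp_form_nonneg {u : ℝ → ℝ} (hu : Continuous u) {T l : ℝ} (hT : 0 ≤ T) (hl : 0 ≤ l) :
    0 ≤ ∫ t in 0..T, u t * ∫ s in 0..t, exp (-((t - s) * l)) * u s := by
  set Y : ℝ → ℝ := fun t ↦ ∫ s in 0..t, exp (s * l) * u s with hY
  have hYd : ∀ t, HasDerivAt Y (exp (t * l) * u t) t := fun t ↦
    ((by fun_prop : Continuous fun s ↦ exp (s * l) * u s).integral_hasStrictDerivAt 0 t).hasDerivAt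
  have hYc : Continuous Y := continuous_iff_continuousAt.2 fun t ↦ (hYd t).continuousAt
  have hy : ∀ t, ∫ s in 0..t, exp (-((t - s) * l)) * u s = exp (-(t * l)) * Y t := by
    intro t
    rw [hY, ← intervalIntegral.integral_const_mul]
    refine intervalIntegral.integral_congr fun s _ ↦ ?_
    rw [← mul_assoc, ← exp_add]; ring_nf
  simp only [hy]
  have hd : ∀ t ∈ uIcc 0 T, HasDerivAt (fun t ↦ (exp (-(t * l)) * Y t) ^ 2 / 2)
      (u t * (exp (-(t * l)) * Y t) - l * (exp (-(t * l)) * Y t) ^ 2) t := by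
    intro t _
    have h1 : HasDerivAt (fun t ↦ exp (-(t * l))) (exp (-(t * l)) * (-(1 * l))) t :=
      ((hasDerivAt_id t).mul_const l).neg.exp
    convert! ((h1.mul (hYd t)).pow 2).div_const 2 using 1
    have : exp (-(t * l)) * exp (t * l) = 1 := by rw [← exp_add]; simp
    simp only [Pi.mul_apply]
    push_cast
    linear_combination (-u t * (exp (-(t * l)) * Y t)) * this
  have h1 := intervalIntegral.integral_eq_sub_of_hasDerivAt hd
    (by apply Continuous.intervalIntegrable; fun_prop)
  rw [intervalIntegral.integral_sub (by apply Continuous.intervalIntegrable; fun_prop)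
    (by apply Continuous.intervalIntegrable; fun_prop)] at h1
  have h2 : 0 ≤ ∫ t in 0..T, l * (exp (-(t * l)) * Y t) ^ 2 :=
    intervalIntegral.integral_nonneg hT fun t _ ↦ by positivity
  have h0 : Y 0 = 0 := by simp [hY]
  rw [h0] at h1
  have : 0 ≤ (exp (-(T * l)) * Y T) ^ 2 / 2 := by positivity
  simp only [mul_zero, ne_eq, OfNat.ofNat_ne_zero, not_false_eq_true, zero_pow, zero_div, sub_zero] at h1
  linarith

/-- For `0 < a < 1` the kernel `r ^ (a - 1)` is of positive type, because it is a mixture of decaying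
exponentials: `Γ (1 - a) r ^ (a - 1) = ∫₀^∞ l ^ (-a) exp (-l r) dl`. -/
lemma rpow_form_nonneg {u : ℝ → ℝ} (hu : Continuous u) {T a : ℝ} (hT : 0 ≤ T) (ha0 : 0 < a)
    (ha1 : a < 1) :
    0 ≤ ∫ t in 0..T, u t * ∫ s in 0..t, (t - s) ^ (a - 1) * u s := by
  have hb : 0 < 1 - a := by linarith
  have hΓ := Gamma_pos_of_pos hb
  have hlap : ∀ r : ℝ, 0 < r →
      ∫ l in Ioi 0, l ^ (1 - a - 1) * exp (-(r * l)) = Gamma (1 - a) * r ^ (a - 1) := by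
    intro r hr
    rw [Real.integral_rpow_mul_exp_neg_mul_Ioi hb hr, mul_comm, one_div, inv_rpow hr.le,
      ← rpow_neg hr.le]
    ring_nf
  have hlapi : ∀ r : ℝ, 0 < r →
      IntegrableOn (fun l : ℝ ↦ l ^ (1 - a - 1) * exp (-(r * l))) (Ioi 0) := by
    intro r hr
    refine Integrable.of_integral_ne_zero ?_
    rw [hlap r hr]; positivity
  have hk : IntegrableOn (fun r : ℝ ↦ r ^ (a - 1)) (Ioo 0 T) := by
    have := (intervalIntegral.intervalIntegrable_rpow' (a := 0) (b := T) (r := a - 1) (by linarith))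
    exact ((intervalIntegrable_iff_integrableOn_Ioc_of_le hT).1 this).mono_set Ioo_subset_Ioc_self
  obtain ⟨hi, he⟩ := quadForm_eq hu hT hk
  set w := (Ioc 0 T).indicator u with hw
  have hwm : Measurable w := hu.measurable.indicator measurableSet_Ioc
  -- The Laplace representation of the kernel, before integrating out the rate `l`.
  set G : ℝ × ℝ → ℝ → ℝ := fun p l ↦ w p.1 * (w p.2 * (Ioo 0 T).indicator
    (fun r ↦ l ^ (1 - a - 1) * exp (-(r * l))) (p.1 - p.2)) with hG
  have hGi : ∀ p, IntegrableOn (G p) (Ioi 0) ∧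
      ∫ l in Ioi 0, G p l = Gamma (1 - a) * (w p.1 * (w p.2 *
        (Ioo 0 T).indicator (fun r ↦ r ^ (a - 1)) (p.1 - p.2))) ∧
      ∫ l in Ioi 0, ‖G p l‖ = Gamma (1 - a) * ‖(w p.1 * (w p.2 *
        (Ioo 0 T).indicator (fun r ↦ r ^ (a - 1)) (p.1 - p.2)))‖ := by
    intro p
    by_cases hp : p.1 - p.2 ∈ Ioo 0 T
    · simp only [hG, indicator_of_mem hp]
      refine ⟨((hlapi _ hp.1).const_mul _).const_mul _, ?_, ?_⟩
      · rw [integral_const_mul, integral_const_mul, hlap _ hp.1]; ring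
      · have : ∀ l ∈ Ioi (0:ℝ), ‖w p.1 * (w p.2 * (l ^ (1 - a - 1) * exp (-((p.1 - p.2) * l))))‖
            = ‖w p.1‖ * (‖w p.2‖ * (l ^ (1 - a - 1) * exp (-((p.1 - p.2) * l)))) := by
          intro l hl
          have hl : 0 < l := hl
          rw [norm_mul, norm_mul, norm_of_nonneg (r := l ^ (1 - a - 1) * _) (by positivity)]
        rw [setIntegral_congr_fun measurableSet_Ioi this]
        rw [integral_const_mul, integral_const_mul, hlap _ hp.1, norm_mul, norm_mul,
          norm_of_nonneg (rpow_nonneg hp.1.le _)]; ring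
    · simp [hG, indicator_of_notMem hp]
  have hGm : Measurable (Function.uncurry G) := by
    have : Function.uncurry G = fun q : (ℝ × ℝ) × ℝ ↦ w q.1.1 * (w q.1.2 *
        {q : (ℝ × ℝ) × ℝ | q.1.1 - q.1.2 ∈ Ioo 0 T}.indicator
          (fun q ↦ q.2 ^ (1 - a - 1) * exp (-((q.1.1 - q.1.2) * q.2))) q) := by
      ext ⟨p, l⟩
      simp [hG, indicator_apply]
    rw [this]
    refine (by fun_prop : Measurable fun q : (ℝ × ℝ) × ℝ ↦ w q.1.1).mul
      ((by fun_prop : Measurable fun q : (ℝ × ℝ) × ℝ ↦ w q.1.2).mul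
        (Measurable.indicator (by fun_prop) ?_))
    exact (by fun_prop : Measurable fun q : (ℝ × ℝ) × ℝ ↦ q.1.1 - q.1.2) measurableSet_Ioo
  have hGint : Integrable (Function.uncurry G)
      ((volume.prod volume).prod (volume.restrict (Ioi 0))) := by
    rw [integrable_prod_iff hGm.aestronglyMeasurable]
    refine ⟨Filter.Eventually.of_forall fun p ↦ (hGi p).1, ?_⟩
    have : (fun p ↦ ∫ l in Ioi 0, ‖Function.uncurry G (p, l)‖) = _ :=
      funext fun p ↦ (hGi p).2.2
    rw [this]
    exact hi.norm.const_mul _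
  have hswap := integral_integral_swap hGint
  simp only [fun p ↦ (hGi p).2.1] at hswap
  rw [integral_const_mul, he] at hswap
  refine (mul_nonneg_iff_of_pos_left hΓ).1 ?_
  rw [hswap]
  refine setIntegral_nonneg measurableSet_Ioi fun l hl ↦ ?_
  have hl : 0 < l := hl
  simp only [hG]
  have hc : Continuous fun r : ℝ ↦ l ^ (1 - a - 1) * exp (-(r * l)) := by fun_prop
  rw [(quadForm_eq hu hT (hc.continuousOn.integrableOn_Icc.mono_set Ioo_subset_Icc_self)).2]
  simp only [mul_assoc, intervalIntegral.integral_const_mul, mul_left_comm _ (l ^ (1 - a - 1))]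
  exact mul_nonneg (by positivity) (exp_form_nonneg hu hT hl.le)


/-! ### Beta integral and Mittag-Leffler series -/

lemma kernel_integrable {a : ℝ} (ha : 0 < a) (t x y : ℝ) :
    IntervalIntegrable (fun s : ℝ ↦ (t - s) ^ (a - 1)) volume x y := by
  have := (intervalIntegral.intervalIntegrable_rpow' (a := t - x) (b := t - y) (r := a - 1)
    (by linarith)).comp_sub_left t
  simpa using this

lemma kernel_integral {a : ℝ} (ha : 0 < a) (t x y : ℝ) :
    ∫ s in x..y, (t - s) ^ (a - 1) = ((t - x) ^ a - (t - y) ^ a) / a := by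
  rw [intervalIntegral.integral_comp_sub_left (fun r ↦ r ^ (a - 1)) t,
    integral_rpow (Or.inl (by linarith))]
  simp

lemma beta_integral {a c t : ℝ} (ha : 0 < a) (hc : 0 < c) (ht : 0 < t) :
    ∫ s in 0..t, (t - s) ^ (a - 1) * s ^ (c - 1)
      = Gamma a * Gamma c / Gamma (a + c) * t ^ (a + c - 1) := by
  -- Mathlib's scaled beta integral is complex-valued.
  have h1 := Complex.betaIntegral_scaled (c : ℂ) (a : ℂ) ht
  have h2 := Complex.Gamma_mul_Gamma_eq_betaIntegral (s := (c : ℂ)) (t := (a : ℂ))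
    (by simpa using hc) (by simpa using ha)
  have h3 : ∫ x in 0..t, (x : ℂ) ^ ((c : ℂ) - 1) * ((t : ℂ) - x) ^ ((a : ℂ) - 1)
      = ((∫ s in 0..t, (t - s) ^ (a - 1) * s ^ (c - 1) : ℝ) : ℂ) := by
    rw [← intervalIntegral.integral_ofReal]
    refine intervalIntegral.integral_congr fun s hs ↦ ?_
    rw [uIcc_of_le ht.le] at hs
    push_cast [Complex.ofReal_cpow hs.1, Complex.ofReal_cpow (sub_nonneg.2 hs.2)]
    ring
  rw [h3] at h1
  have hne : Complex.Gamma (a + c) ≠ 0 := by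
    rw [← Complex.ofReal_add, Complex.Gamma_ofReal]
    exact_mod_cast (Gamma_pos_of_pos (by positivity)).ne'
  have h4 : Complex.betaIntegral c a
      = Complex.Gamma a * Complex.Gamma c / Complex.Gamma (a + c) := by
    rw [eq_div_iff hne, mul_comm, mul_comm (Complex.Gamma a), h2, add_comm]
  rw [h4] at h1
  apply Complex.ofReal_injective
  rw [h1]
  push_cast [Complex.ofReal_cpow ht.le, ← Complex.Gamma_ofReal]
  rw [add_comm (c : ℂ) a]; ring

/-- The two-parametric Mittag-Leffler function `E_{ρ,b}(x) = ∑ x^k / Γ(ρk + b)`. -/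
noncomputable def ml (ρ b x : ℝ) : ℝ := ∑' k : ℕ, x ^ k / Gamma (ρ * k + b)

/-- For `ρ, b ≥ 1` the series is dominated by the exponential series, from the index `1` on, where
`Γ(ρk + b) ≥ Γ(k + 1)` because `Γ` increases on `[2, ∞)`. -/
lemma ml_summable {ρ b : ℝ} (hρ : 1 ≤ ρ) (hb : 1 ≤ b) (x : ℝ) :
    Summable fun k : ℕ ↦ x ^ k / Gamma (ρ * k + b) := by
  rw [← summable_nat_add_iff 1]
  refine Summable.of_norm_bounded ((summable_nat_add_iff 1).2
    (summable_pow_div_factorial |x|)) fun k ↦ ?_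
  have hk : (2 : ℝ) ≤ (k + 1 : ℕ) + 1 := by push_cast; linarith [k.cast_nonneg (α := ℝ)]
  have hk' : ((k + 1 : ℕ) : ℝ) + 1 ≤ ρ * (k + 1 : ℕ) + b := by nlinarith
  have hΓ : ((k + 1).factorial : ℝ) ≤ Gamma (ρ * (k + 1 : ℕ) + b) := by
    rw [← Gamma_nat_eq_factorial]
    exact Gamma_strictMonoOn_Ici.monotoneOn hk (hk.trans hk') hk'
  have h0 : (0 : ℝ) < (k + 1).factorial := by positivity
  rw [norm_div, norm_pow, norm_eq_abs, norm_of_nonneg (h0.le.trans hΓ)]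
  gcongr

lemma ml_continuous {ρ b : ℝ} (hρ : 1 ≤ ρ) (hb : 1 ≤ b) : Continuous (ml ρ b) := by
  refine continuous_iff_continuousAt.2 fun x ↦ ?_
  have h : ContinuousOn (ml ρ b) (Icc (-(|x| + 1)) (|x| + 1)) := by
    refine continuousOn_tsum (fun k ↦ by fun_prop) (ml_summable hρ hb (|x| + 1)) fun k y hy ↦ ?_
    have hp : 0 < Gamma (ρ * k + b) := Gamma_pos_of_pos (by positivity)
    rw [norm_div, norm_pow, norm_eq_abs, norm_of_nonneg hp.le]
    gcongr
    exact abs_le.2 hy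
  exact h.continuousAt (Icc_mem_nhds (by linarith [neg_abs_le x]) (by linarith [le_abs_self x]))

lemma ml_zero {ρ : ℝ} : ml ρ 1 0 = 1 := by
  rw [ml, tsum_eq_single 0 (fun k hk ↦ by simp [hk])]
  simp

/-- Fractional integration of order `a` (up to the factor `Γ a`) raises the second parameter of the
Mittag-Leffler function by `a`. The series is integrated term by term with the beta integral. -/
lemma ml_conv {ρ a b t : ℝ} (hρ : 1 ≤ ρ) (ha : 0 < a) (hb : 1 ≤ b) (ht : 0 < t) :
    ∫ s in 0..t, (t - s) ^ (a - 1) * (s ^ (b - 1) * ml ρ b (-s ^ ρ))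
      = Gamma a * (t ^ (a + b - 1) * ml ρ (a + b) (-t ^ ρ)) := by
  have hΓ : ∀ k : ℕ, 0 < Gamma (ρ * k + b) := fun k ↦ Gamma_pos_of_pos (by positivity)
  have key := intervalIntegral.hasSum_integral_of_dominated_convergence
    (a := 0) (b := t) (μ := volume) (ι := ℕ)
    (F := fun k s ↦ (t - s) ^ (a - 1) * (s ^ (b - 1) * ((-s ^ ρ) ^ k / Gamma (ρ * k + b))))
    (f := fun s ↦ (t - s) ^ (a - 1) * (s ^ (b - 1) * ml ρ b (-s ^ ρ)))
    (fun k s ↦ (t - s) ^ (a - 1) * (t ^ (b - 1) * ((t ^ ρ) ^ k / Gamma (ρ * k + b))))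
    (fun k ↦ (by fun_prop : Measurable _).aestronglyMeasurable)
    (fun k ↦ Filter.Eventually.of_forall fun s hs ↦ by
      rw [uIoc_of_le ht.le] at hs
      have h1 := sub_nonneg.2 hs.2
      rw [norm_mul, norm_mul, norm_div, norm_pow, norm_neg, norm_of_nonneg (hΓ k).le,
        norm_of_nonneg (rpow_nonneg h1 _), norm_of_nonneg (rpow_nonneg hs.1.le _),
        norm_of_nonneg (rpow_nonneg hs.1.le _)]
      have := hΓ k
      have h2 := hs.1.le
      have h3 := hs.2
      have h4 : 0 ≤ b - 1 := by linarith
      gcongr)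
    (Filter.Eventually.of_forall fun s _ ↦
      ((ml_summable hρ hb (t ^ ρ)).mul_left _).mul_left _)
    (by
      simp only [tsum_mul_left]
      exact (kernel_integrable ha t 0 t).mul_const _)
    (Filter.Eventually.of_forall fun s _ ↦
      ((ml_summable hρ hb (-s ^ ρ)).hasSum.mul_left _).mul_left _)
  rw [← key.tsum_eq, ml, ← tsum_mul_left, ← tsum_mul_left]
  congr 1
  ext k
  have hc : 0 < ρ * k + b := by positivity
  have h1 : ∀ s ∈ uIcc 0 t, (t - s) ^ (a - 1) * (s ^ (b - 1) * ((-s ^ ρ) ^ k / Gamma (ρ * k + b)))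
      = ((-1) ^ k / Gamma (ρ * k + b)) * ((t - s) ^ (a - 1) * s ^ (ρ * k + b - 1)) := by
    intro s hs
    rw [uIcc_of_le ht.le] at hs
    have : s ^ (ρ * k + b - 1) = s ^ (b - 1) * (s ^ ρ) ^ k := by
      rw [← rpow_mul_natCast hs.1, ← rpow_add_of_nonneg hs.1 (by linarith) (by positivity)]
      ring_nf
    rw [this, neg_pow]; ring
  rw [intervalIntegral.integral_congr h1, intervalIntegral.integral_const_mul,
    beta_integral ha hc ht]
  have : t ^ (a + (ρ * k + b) - 1) = t ^ (a + b - 1) * (t ^ ρ) ^ k := by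
    rw [← rpow_mul_natCast ht.le, ← rpow_add ht]
    ring_nf
  rw [this, neg_pow (t ^ ρ), show a + (ρ * k + b) = ρ * k + (a + b) by ring]
  have := (hΓ k).ne'
  field_simp

/-! ### Boundedness of the fractional oscillator and its derivative -/

/-- The solution `u(t) = E_{ρ,1}(-t^ρ)` of the fractional oscillation equation. It is meaningful for
`t ≥ 0`; at negative `t` the real power takes its conventional value. -/
noncomputable def relax (ρ t : ℝ) : ℝ := ml ρ 1 (-t ^ ρ)

/-- The impulse response `e(t) = t^(ρ-1) E_{ρ,ρ}(-t^ρ)`, which equals `-u'(t)` for `u = relax ρ`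
and `t > 0`. -/
noncomputable def resp (ρ t : ℝ) : ℝ := t ^ (ρ - 1) * ml ρ ρ (-t ^ ρ)

lemma relax_continuous {ρ : ℝ} (hρ : 1 < ρ) : Continuous (relax ρ) :=
  (ml_continuous hρ.le le_rfl).comp (continuous_rpow_const (by linarith)).neg

lemma resp_continuous {ρ : ℝ} (hρ : 1 < ρ) : Continuous (resp ρ) :=
  (continuous_rpow_const (by linarith)).mul
    ((ml_continuous hρ.le hρ.le).comp (continuous_rpow_const (by linarith)).neg)

/-- The fractional oscillation equation, in the form `Γ(ρ-1) e = r^(ρ-2) * u` (convolution). -/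
lemma relax_conv {ρ t : ℝ} (hρ : 1 < ρ) (ht : 0 < t) :
    ∫ s in 0..t, (t - s) ^ (ρ - 1 - 1) * relax ρ s = Gamma (ρ - 1) * resp ρ t := by
  have := ml_conv hρ.le (a := ρ - 1) (b := 1) (by linarith) le_rfl ht
  simpa [relax, resp] using this

lemma ml_shift {ρ : ℝ} (hρ : 1 ≤ ρ) (x : ℝ) : ml ρ 1 x = 1 + x * ml ρ (1 + ρ) x := by
  rw [ml, (ml_summable hρ le_rfl x).tsum_eq_zero_add, ml, ← tsum_mul_left]
  congr 1
  · simp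
  · congr 1
    ext k
    rw [pow_succ, show ρ * (k + 1 : ℕ) + 1 = ρ * k + (1 + ρ) by push_cast; ring]
    ring

/-- The integrated form of `u' = -e` with `u(0) = 1`. -/
lemma resp_integral {ρ t : ℝ} (hρ : 1 < ρ) (ht : 0 ≤ t) :
    ∫ s in 0..t, resp ρ s = 1 - relax ρ t := by
  have h := ml_shift hρ.le (-t ^ ρ)
  rcases ht.eq_or_lt with rfl | ht
  · simp [relax, ml_zero, zero_rpow (by linarith : ρ ≠ 0)]
  · have := ml_conv hρ.le (a := 1) (b := ρ) one_pos hρ.le ht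
    simp only [sub_self, rpow_zero, one_mul, Gamma_one, add_sub_cancel_left] at this
    rw [relax, h]
    simp only [resp, this]
    ring

/-- Energy estimate: `u(T)² - 1 = -2 ∫₀ᵀ u e`, and the integral is the quadratic form of a kernel of
positive type. -/
lemma abs_relax_le_one {ρ T : ℝ} (hρ₁ : 1 < ρ) (hρ₂ : ρ < 2) (hT : 0 ≤ T) :
    |relax ρ T| ≤ 1 := by
  have hrc := resp_continuous hρ₁
  have hΓ : 0 < Gamma (ρ - 1) := Gamma_pos_of_pos (by linarith)
  -- `U` agrees with `relax ρ` on `[0, ∞)` and is differentiable on the whole line.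
  set U : ℝ → ℝ := fun t ↦ 1 - ∫ s in 0..t, resp ρ s with hU
  have hUd : ∀ t, HasDerivAt U (-resp ρ t) t := fun t ↦
    ((hrc.integral_hasStrictDerivAt 0 t).hasDerivAt).const_sub 1
  have hUc : Continuous U := continuous_iff_continuousAt.2 fun t ↦ (hUd t).continuousAt
  have hUu : ∀ t, 0 ≤ t → U t = relax ρ t := fun t ht ↦ by
    simp only [hU, resp_integral hρ₁ ht]; ring
  have h1 := intervalIntegral.integral_eq_sub_of_hasDerivAt (a := 0) (b := T)
    (f := fun t ↦ U t ^ 2) (f' := fun t ↦ (-2) * (U t * resp ρ t))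
    (fun t _ ↦ by convert! (hUd t).pow 2 using 1; push_cast; ring)
    (by apply Continuous.intervalIntegrable; fun_prop)
  have h2 := rpow_form_nonneg (relax_continuous hρ₁) hT (a := ρ - 1) (by linarith) (by linarith)
  have h3 : ∫ t in 0..T, relax ρ t * ∫ s in 0..t, (t - s) ^ (ρ - 1 - 1) * relax ρ s
      = Gamma (ρ - 1) * ∫ t in 0..T, U t * resp ρ t := by
    rw [← intervalIntegral.integral_const_mul]
    refine intervalIntegral.integral_congr_uIoo fun t ht ↦ ?_
    rw [uIoo_of_le hT] at ht
    simp only [relax_conv hρ₁ ht.1, hUu t ht.1.le]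
    ring
  rw [h3] at h2
  have h4 := (mul_nonneg_iff_of_pos_left hΓ).1 h2
  rw [intervalIntegral.integral_const_mul] at h1
  have h0 : U 0 = 1 := by simp [hU]
  simp only [h0, hUu T hT] at h1
  exact (sq_le_one_iff_abs_le_one _).1 (by linarith)

/-- A uniform bound on the oscillation of `e` over intervals of length at most one. Since `|u| ≤ 1`
and the kernel decreases, the increment of `Γ(ρ-1) e` is at most
`∫₀ᵗ ((t - s)^(ρ-2) - (t + h - s)^(ρ-2)) ds + ∫ₜ^{t+h} (t + h - s)^(ρ-2) ds`,
which is at most `2 h^(ρ-1) / (ρ-1)`. -/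
lemma resp_holder {ρ t h : ℝ} (hρ₁ : 1 < ρ) (hρ₂ : ρ < 2) (ht : 0 < t) (hh : 0 ≤ h)
    (hh1 : h ≤ 1) : |resp ρ (t + h) - resp ρ t| ≤ 2 / ((ρ - 1) * Gamma (ρ - 1)) := by
  have ha : 0 < ρ - 1 := by linarith
  have hΓ : 0 < Gamma (ρ - 1) := Gamma_pos_of_pos ha
  have huc := relax_continuous hρ₁
  have hki := kernel_integrable ha
  have hi : ∀ r x y : ℝ, IntervalIntegrable (fun s ↦ (r - s) ^ (ρ - 1 - 1) * relax ρ s)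
      volume x y := fun r x y ↦ (hki r x y).mul_continuousOn huc.continuousOn
  have e1 := relax_conv hρ₁ ht
  have e2 := relax_conv hρ₁ (t := t + h) (by linarith)
  rw [← intervalIntegral.integral_add_adjacent_intervals (hi (t + h) 0 t) (hi (t + h) t (t + h))]
    at e2
  have e3 : Gamma (ρ - 1) * (resp ρ (t + h) - resp ρ t)
      = (∫ s in 0..t, ((t + h - s) ^ (ρ - 1 - 1) * relax ρ s - (t - s) ^ (ρ - 1 - 1) * relax ρ s))
        + ∫ s in t..(t + h), (t + h - s) ^ (ρ - 1 - 1) * relax ρ s := by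
    rw [intervalIntegral.integral_sub (hi _ _ _) (hi _ _ _)]
    linarith
  have b1 : |∫ s in 0..t, ((t + h - s) ^ (ρ - 1 - 1) * relax ρ s
      - (t - s) ^ (ρ - 1 - 1) * relax ρ s)|
      ≤ ∫ s in 0..t, ((t - s) ^ (ρ - 1 - 1) - (t + h - s) ^ (ρ - 1 - 1)) := by
    rw [← norm_eq_abs]
    refine intervalIntegral.norm_integral_le_of_norm_le ht.le ?_ ((hki t 0 t).sub (hki (t + h) 0 t))
    -- At `s = t` the kernel takes the junk value of `0 ^ (ρ - 2)`.
    have : ∀ᵐ s : ℝ, s ≠ t := by simp [ae_iff]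
    filter_upwards [this] with s hne hs
    have hst : 0 < t - s := sub_pos.2 (lt_of_le_of_ne hs.2 hne)
    have hmono : (t + h - s) ^ (ρ - 1 - 1) ≤ (t - s) ^ (ρ - 1 - 1) :=
      rpow_le_rpow_of_nonpos hst (by linarith) (by linarith)
    rw [← sub_mul, norm_mul, norm_eq_abs, abs_sub_comm, abs_of_nonneg (sub_nonneg.2 hmono)]
    exact mul_le_of_le_one_right (sub_nonneg.2 hmono) (abs_relax_le_one hρ₁ hρ₂ hs.1.le)
  have b2 : |∫ s in t..(t + h), (t + h - s) ^ (ρ - 1 - 1) * relax ρ s|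
      ≤ ∫ s in t..(t + h), (t + h - s) ^ (ρ - 1 - 1) := by
    rw [← norm_eq_abs]
    refine intervalIntegral.norm_integral_le_of_norm_le (by linarith) ?_ (hki (t + h) t (t + h))
    refine Filter.Eventually.of_forall fun s hs ↦ ?_
    have h0 : 0 ≤ (t + h - s) ^ (ρ - 1 - 1) := rpow_nonneg (sub_nonneg.2 hs.2) _
    rw [norm_mul, norm_of_nonneg h0]
    exact mul_le_of_le_one_right h0 (abs_relax_le_one hρ₁ hρ₂ (ht.le.trans hs.1.le))
  rw [intervalIntegral.integral_sub (hki _ _ _) (hki _ _ _), kernel_integral ha,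
    kernel_integral ha] at b1
  rw [kernel_integral ha] at b2
  simp only [sub_zero, sub_self, zero_rpow ha.ne', add_sub_cancel_left] at b1 b2
  have hm : t ^ (ρ - 1) ≤ (t + h) ^ (ρ - 1) := by gcongr; linarith
  have hone : h ^ (ρ - 1) ≤ 1 := rpow_le_one hh hh1 ha.le
  have hfin : |Gamma (ρ - 1)| * |resp ρ (t + h) - resp ρ t| ≤ 2 / (ρ - 1) := by
    rw [← abs_mul, e3]
    refine (abs_add_le _ _).trans ((add_le_add b1 b2).trans ?_)
    rw [← sub_div, ← add_div]
    gcongr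
    linarith
  rw [abs_of_pos hΓ] at hfin
  rw [← div_div, le_div_iff₀ hΓ]
  linarith

/-- A Landau-type interpolation: over `[t, t + 1]` the mean of `e` is `u(t) - u(t + 1)`, of size at
most `2`, and `e` oscillates by a bounded amount there. -/
lemma abs_resp_le {ρ t : ℝ} (hρ₁ : 1 < ρ) (hρ₂ : ρ < 2) (ht : 0 < t) :
    |resp ρ t| ≤ 2 + 2 / ((ρ - 1) * Gamma (ρ - 1)) := by
  have hrc := resp_continuous hρ₁
  have hmean : ∫ s in t..(t + 1), resp ρ s = relax ρ t - relax ρ (t + 1) := by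
    rw [← intervalIntegral.integral_interval_sub_left (hrc.intervalIntegrable 0 _)
      (hrc.intervalIntegrable 0 _), resp_integral hρ₁ ht.le, resp_integral hρ₁ (by linarith)]
    ring
  have hdiff : |∫ s in t..(t + 1), (resp ρ s - resp ρ t)|
      ≤ 2 / ((ρ - 1) * Gamma (ρ - 1)) * |t + 1 - t| := by
    rw [← norm_eq_abs]
    refine intervalIntegral.norm_integral_le_of_norm_le_const fun s hs ↦ ?_
    rw [uIoc_of_le (by linarith)] at hs
    have := resp_holder (h := s - t) hρ₁ hρ₂ ht (by linarith [hs.1]) (by linarith [hs.2])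
    rwa [add_sub_cancel] at this
  rw [intervalIntegral.integral_sub (hrc.intervalIntegrable _ _) (by simp), hmean] at hdiff
  simp only [intervalIntegral.integral_const, add_sub_cancel_left, one_smul, abs_one,
    mul_one] at hdiff
  have h1 := abs_le.1 (abs_relax_le_one hρ₁ hρ₂ ht.le)
  have h2 := abs_le.1 (abs_relax_le_one hρ₁ hρ₂ (T := t + 1) (by linarith))
  have h3 := abs_le.1 hdiff
  exact abs_le.2 ⟨by linarith, by linarith⟩

end MLBound

/-- For `1 < ρ < 2` there is a constant `M > 0`, depending only on `ρ`, such that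
for every `α > 0` and `t > 0`, `α t^{ρ−1} |E_{ρ,ρ}(−α t^ρ)| ≤ M α^{1/ρ}`;
i.e. the derivative of `t ↦ E_ρ(−α t^ρ)` is bounded by `M α^{1/ρ}` uniformly in `t`. -/
theorem mittagLeffler_deriv_uniform_bound (ρ : ℝ) (hρ₁ : 1 < ρ) (hρ₂ : ρ < 2) :
    ∃ M : ℝ, 0 < M ∧ ∀ α : ℝ, 0 < α → ∀ t : ℝ, 0 < t →
      α * t ^ (ρ - 1) * |mittagLeffler2 ρ (-(α * t ^ ρ))| ≤ M * α ^ (1 / ρ) := by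
  have hΓ : 0 < Real.Gamma (ρ - 1) := Real.Gamma_pos_of_pos (by linarith)
  have hρ : 0 < ρ - 1 := by linarith
  have hρ0 : ρ ≠ 0 := by linarith
  refine ⟨2 + 2 / ((ρ - 1) * Real.Gamma (ρ - 1)), by positivity, fun α hα t ht ↦ ?_⟩
  have hs : 0 < α ^ (1 / ρ) * t := by positivity
  have hb := MLBound.abs_resp_le hρ₁ hρ₂ hs
  have hpow : (α ^ (1 / ρ) * t) ^ ρ = α * t ^ ρ := by
    rw [Real.mul_rpow (by positivity) ht.le, ← Real.rpow_mul hα.le, one_div_mul_cancel hρ0,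
      Real.rpow_one]
  have hml : MLBound.ml ρ ρ (-(α * t ^ ρ)) = mittagLeffler2 ρ (-(α * t ^ ρ)) := by
    simp only [MLBound.ml, mittagLeffler2, mul_add, mul_one]
  have hscale : α * t ^ (ρ - 1) = (α ^ (1 / ρ) * t) ^ (ρ - 1) * α ^ (1 / ρ) := by
    rw [Real.mul_rpow (by positivity) ht.le, mul_right_comm, ← Real.rpow_add_one (by positivity),
      sub_add_cancel, ← Real.rpow_mul hα.le, one_div_mul_cancel hρ0, Real.rpow_one]
  rw [MLBound.resp, hpow, hml, abs_mul, abs_of_nonneg (by positivity)] at hb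
  rw [hscale, mul_right_comm]
  gcongr
end

section
/- Let 1 < ρ < 2. There exists a constant C > 0, depending only on ρ, such that for every α > 0, every T > 0 and all 0 ≤ s ≤ t ≤ T: ∫_0^s (E_ρ(−α(t−u)^ρ) − E_ρ(−α(s−u)^ρ))^2 du + ∫_s^t E_ρ(−α(t−u)^ρ)^2 du ≤ C · (α^{2/ρ} T^2 + 1) · (t − s). -/
/-!
With `F(x) = E_ρ(-x^ρ)` one has `E_ρ(-α z^ρ) = F(α^{1/ρ} z)` for `z ≥ 0`, so the estimate follows
once `|F| ≤ 1` and `F` is Lipschitz, with constant `L`, on `[0, ∞)`: the first integral is at most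
`L² α^{2/ρ} (t - s)² s` and the second at most `t - s`.

Termwise integration of the series (`mlf_eq_integral`, `mlfDeriv_eq_integral`) gives the
fractional relaxation equation, for `x ≥ 0`,
`F' (x) = -(1 / Γ(ρ-1)) ∫_0^x (x - u)^{ρ-2} F(u) du` with `F(0) = 1`.

*Boundedness.* `F(X)² - 1 = 2 ∫_0^X F F'`, and this is nonpositive because the kernel `z^{ρ-2}`,
whose exponent lies in `(-1, 0)`, is of positive type (`rpow_kernel_nonneg`): by the Gamma integral
it is a positive mixture of exponentials `e^{-zy}`, and for an exponential kernel the quadratic form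
is visibly an exact derivative of a square plus a square (`exp_kernel_nonneg`).

*Lipschitz bound.* Since `|F| ≤ 1` and `∫_0^x z^{ρ-2} dz = x^{ρ-1} / (ρ-1)`, the Volterra formula
bounds the oscillation of `F'` on intervals of length one, uniformly (`abs_mlfDeriv_sub_le`).
Comparing `F'(x)` with its mean `F(x+1) - F(x)` over `[x, x+1]` then bounds `F'`.
-/


/-- The Mittag-Leffler function `E_ρ(x) = ∑ x^k / Γ(ρ k + 1)`. -/
noncomputable def mittagLeffler (ρ x : ℝ) : ℝ :=
  ∑' k : ℕ, x ^ k / Real.Gamma (ρ * k + 1)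

open MeasureTheory Set

/-! ### Power series with factorially growing denominators -/

lemma factorial_le_Gamma {ρ b : ℝ} (hρ : 1 ≤ ρ) (hb : 1 ≤ b) {k : ℕ} (hk : 1 ≤ k) :
    (k.factorial : ℝ) ≤ Real.Gamma (ρ * k + b) := by
  have hk' : (1 : ℝ) ≤ k := by exact_mod_cast hk
  rw [← Real.Gamma_nat_eq_factorial]
  refine Real.Gamma_strictMonoOn_Ici.monotoneOn ?_ ?_ ?_
  · simp only [mem_Ici]; linarith
  · simp only [mem_Ici]; nlinarith
  · nlinarith

lemma summable_pow_div {g : ℕ → ℝ} (hg : ∀ k : ℕ, 1 ≤ k → (k.factorial : ℝ) ≤ g k) (z : ℝ) :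
    Summable fun k : ℕ => z ^ k / g k := by
  refine Summable.of_norm_bounded_eventually_nat (Real.summable_pow_div_factorial |z|) ?_
  filter_upwards [Filter.eventually_ge_atTop 1] with k hk
  have h1 := hg k hk
  have h2 : (0 : ℝ) < k.factorial := by positivity
  rw [norm_div, norm_pow, Real.norm_eq_abs, Real.norm_eq_abs, abs_of_pos (h2.trans_le h1)]
  gcongr

lemma continuous_tsum_pow_div {g : ℕ → ℝ} (hg : ∀ k : ℕ, 1 ≤ k → (k.factorial : ℝ) ≤ g k) :
    Continuous fun z : ℝ => ∑' k : ℕ, z ^ k / g k := by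
  rw [continuous_iff_continuousAt]
  intro z
  have h : ContinuousOn (fun z : ℝ => ∑' k : ℕ, z ^ k / g k) (Metric.ball 0 (|z| + 1)) := by
    refine continuousOn_tsum (fun k => by fun_prop) (summable_pow_div hg (|z| + 1)).norm ?_
    intro k y hy
    rw [norm_div, norm_div, norm_pow, norm_pow]
    have : ‖y‖ ≤ ‖|z| + 1‖ := by
      rw [mem_ball_zero_iff] at hy
      exact hy.le.trans (le_abs_self _)
    gcongr
  exact h.continuousAt (Metric.isOpen_ball.mem_nhds (by simp))

/-- Termwise integration against a nonnegative weight `w`; the value `d k` of the `k`-th integral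
without sign is also its norm, so summability of `d` justifies the exchange. -/
lemma integral_mul_tsum {ρ x : ℝ} (hρ : 0 < ρ) (hx : 0 ≤ x) {w : ℝ → ℝ} {g d : ℕ → ℝ}
    (hw : IntervalIntegrable w volume 0 x) (hw0 : ∀ u ∈ Ioc 0 x, 0 ≤ w u) (hg : ∀ k, 0 ≤ g k)
    (hd : ∀ k, ∫ u in (0 : ℝ)..x, w u * ((u ^ ρ) ^ k / g k) = d k) (hs : Summable d) :
    ∫ u in (0 : ℝ)..x, w u * ∑' k : ℕ, (-(u ^ ρ)) ^ k / g k = ∑' k : ℕ, (-1) ^ k * d k := by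
  have hcont : Continuous fun u : ℝ => u ^ ρ := Real.continuous_rpow_const hρ.le
  have hint : ∀ k, IntervalIntegrable (fun u => w u * ((-(u ^ ρ)) ^ k / g k)) volume 0 x := by
    intro k
    refine hw.mul_continuousOn (Continuous.continuousOn ?_)
    fun_prop
  have hnorm : ∀ k, ∫ u in Ioc 0 x, ‖w u * ((-(u ^ ρ)) ^ k / g k)‖ = d k := by
    intro k
    rw [← hd k, intervalIntegral.integral_of_le hx]
    refine setIntegral_congr_fun measurableSet_Ioc fun u hu => ?_
    have h1 : 0 ≤ u ^ ρ := Real.rpow_nonneg hu.1.le _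
    simp only [norm_mul, norm_div, norm_pow, norm_neg, Real.norm_eq_abs]
    rw [abs_of_nonneg (hw0 u hu), abs_of_nonneg h1, abs_of_nonneg (hg k)]
  have key := (hasSum_integral_of_summable_integral_norm (μ := volume.restrict (Ioc 0 x))
    (F := fun (k : ℕ) u => w u * ((-(u ^ ρ)) ^ k / g k))
    (fun k => (intervalIntegrable_iff_integrableOn_Ioc_of_le hx).1 (hint k))
    (by simpa only [hnorm] using hs)).tsum_eq
  rw [intervalIntegral.integral_of_le hx]
  simp only [tsum_mul_left] at key
  rw [← key]
  refine tsum_congr fun k => ?_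
  rw [← hd k, intervalIntegral.integral_of_le hx, ← integral_const_mul]
  refine setIntegral_congr_fun measurableSet_Ioc fun u hu => ?_
  simp only [neg_pow (u ^ ρ) k]
  ring

/-! ### The fractional relaxation equation -/

lemma intervalIntegrable_kernel {r : ℝ} (hr : -1 < r) (x a b : ℝ) :
    IntervalIntegrable (fun u => (x - u) ^ r) volume a b := by
  have := (intervalIntegral.intervalIntegrable_rpow' (a := x - a) (b := x - b) hr).comp_sub_left x
  simpa using this

/-- Euler's Beta integral, rescaled to `[0, x]` and with real exponents. -/
lemma integral_kernel_mul_rpow {r s x : ℝ} (hr : 0 < r) (hs : 0 < s) (hx : 0 < x) :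
    ∫ u in (0 : ℝ)..x, (x - u) ^ (r - 1) * u ^ (s - 1) =
      x ^ (s + r - 1) * (Real.Gamma s * Real.Gamma r / Real.Gamma (s + r)) := by
  have h := Complex.betaIntegral_scaled (s : ℂ) (r : ℂ) hx
  have h2 : Complex.betaIntegral s r = ((Real.Gamma s * Real.Gamma r / Real.Gamma (s + r) : ℝ) : ℂ) := by
    rw [Complex.betaIntegral_eq_Gamma_mul_div _ _ (by simpa) (by simpa)]
    rw [← Complex.ofReal_add, Complex.Gamma_ofReal, Complex.Gamma_ofReal, Complex.Gamma_ofReal]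
    norm_cast
  rw [h2] at h
  have h3 : (∫ u in (0 : ℝ)..x, (u : ℂ) ^ ((s : ℂ) - 1) * ((x : ℂ) - u) ^ ((r : ℂ) - 1)) =
      ((∫ u in (0 : ℝ)..x, (x - u) ^ (r - 1) * u ^ (s - 1) : ℝ) : ℂ) := by
    rw [← intervalIntegral.integral_ofReal]
    refine intervalIntegral.integral_congr fun u hu => ?_
    rw [uIcc_of_le hx.le] at hu
    push_cast
    rw [Complex.ofReal_cpow hu.1, Complex.ofReal_cpow (sub_nonneg.2 hu.2)]
    push_cast
    ring
  rw [h3] at h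
  have h4 : (x : ℂ) ^ ((s : ℂ) + r - 1) = ((x ^ (s + r - 1) : ℝ) : ℂ) := by
    rw [Complex.ofReal_cpow hx.le]
    push_cast
    ring_nf
  rw [h4] at h
  exact_mod_cast h

/-- The relaxation function `F(x) = E_ρ(-x^ρ)`; only the values at `x ≥ 0` are meaningful. -/
noncomputable def mlf (ρ x : ℝ) : ℝ := mittagLeffler ρ (-(x ^ ρ))

/-- The derivative `F'(x) = -x^{ρ-1} E_{ρ,ρ}(-x^ρ)` of `mlf ρ` for `x ≥ 0`, written as a series;
`hasDerivWithinAt_mlf` shows that it is the derivative. -/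
noncomputable def mlfDeriv (ρ x : ℝ) : ℝ :=
  -(x ^ (ρ - 1) * ∑' k : ℕ, (-(x ^ ρ)) ^ k / Real.Gamma (ρ * k + ρ))

lemma continuous_mlf {ρ : ℝ} (hρ : 1 < ρ) : Continuous (mlf ρ) := by
  refine (continuous_tsum_pow_div (g := fun k : ℕ => Real.Gamma (ρ * k + 1))
    fun k hk => factorial_le_Gamma hρ.le le_rfl hk).comp ?_
  exact (Real.continuous_rpow_const (by linarith)).neg

lemma continuous_mlfDeriv {ρ : ℝ} (hρ : 1 < ρ) : Continuous (mlfDeriv ρ) := by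
  refine ((Real.continuous_rpow_const (by linarith)).mul
    ((continuous_tsum_pow_div (g := fun k : ℕ => Real.Gamma (ρ * k + ρ))
    fun k hk => factorial_le_Gamma hρ.le hρ.le hk).comp ?_)).neg
  exact (Real.continuous_rpow_const (by linarith)).neg

lemma mlf_eq_integral {ρ x : ℝ} (hρ : 1 < ρ) (hx : 0 ≤ x) :
    mlf ρ x = 1 + ∫ u in (0 : ℝ)..x, mlfDeriv ρ u := by
  have hρ0 : 0 < ρ := by linarith
  have hcoef : ∀ k : ℕ, ρ * ((k + 1 : ℕ) : ℝ) + 1 = (ρ * k + ρ) + 1 := by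
    intro k; push_cast; ring
  have hsum := summable_pow_div (g := fun k : ℕ => Real.Gamma (ρ * k + 1))
    (fun k hk => factorial_le_Gamma hρ.le le_rfl hk)
  have key := integral_mul_tsum (x := x) hρ0 hx (w := fun u => u ^ (ρ - 1))
    (g := fun k : ℕ => Real.Gamma (ρ * k + ρ))
    (d := fun k : ℕ => (x ^ ρ) ^ (k + 1) / Real.Gamma (ρ * ((k + 1 : ℕ) : ℝ) + 1))
    (intervalIntegral.intervalIntegrable_rpow' (by linarith))
    (fun u hu => Real.rpow_nonneg hu.1.le _)
    (fun k => (Real.Gamma_pos_of_pos (by positivity)).le) ?_ ?_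
  · have h2 : ∫ u in (0 : ℝ)..x, mlfDeriv ρ u =
        -∑' k : ℕ, (-1) ^ k * ((x ^ ρ) ^ (k + 1) / Real.Gamma (ρ * ((k + 1 : ℕ) : ℝ) + 1)) := by
      rw [← key, ← intervalIntegral.integral_neg]; rfl
    rw [h2, mlf, mittagLeffler, (hsum _).tsum_eq_zero_add, ← tsum_neg]
    congr 1
    · simp
    · refine tsum_congr fun k => ?_
      rw [neg_pow, pow_succ (-1 : ℝ)]; ring
  · intro k
    have h1 : 0 < ρ * k + ρ := by positivity
    have hc : ∀ u ∈ uIcc 0 x, u ^ (ρ - 1) * ((u ^ ρ) ^ k / Real.Gamma (ρ * k + ρ)) =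
        u ^ (ρ * k + ρ - 1) * (Real.Gamma (ρ * k + ρ))⁻¹ := by
      intro u hu
      rw [uIcc_of_le hx] at hu
      rw [← Real.rpow_mul_natCast hu.1, div_eq_mul_inv, ← mul_assoc,
        ← Real.rpow_add_of_nonneg hu.1 (by linarith) (by positivity)]
      ring_nf
    rw [intervalIntegral.integral_congr hc, intervalIntegral.integral_mul_const,
      integral_rpow (Or.inl (by linarith)), hcoef, Real.Gamma_add_one h1.ne',
      ← Real.rpow_mul_natCast hx]
    simp only [sub_add_cancel, Real.zero_rpow h1.ne', sub_zero]
    push_cast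
    rw [show ρ * ((k : ℝ) + 1) = ρ * k + ρ by ring]
    field_simp
  · exact (summable_nat_add_iff 1).2 (hsum (x ^ ρ))

lemma mlfDeriv_eq_integral {ρ x : ℝ} (hρ : 1 < ρ) (hx : 0 ≤ x) :
    Real.Gamma (ρ - 1) * mlfDeriv ρ x = -∫ u in (0 : ℝ)..x, (x - u) ^ (ρ - 2) * mlf ρ u := by
  have hρ0 : 0 < ρ := by linarith
  rcases hx.eq_or_lt with rfl | hx0
  · simp [mlfDeriv, Real.zero_rpow (show ρ - 1 ≠ 0 by linarith)]
  have hsum := summable_pow_div (g := fun k : ℕ => Real.Gamma (ρ * k + ρ))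
    (fun k hk => factorial_le_Gamma hρ.le hρ.le hk)
  have key := integral_mul_tsum (x := x) hρ0 hx (w := fun u => (x - u) ^ (ρ - 2))
    (g := fun k : ℕ => Real.Gamma (ρ * k + 1))
    (d := fun k : ℕ => Real.Gamma (ρ - 1) * x ^ (ρ - 1) * ((x ^ ρ) ^ k / Real.Gamma (ρ * k + ρ)))
    (intervalIntegrable_kernel (by linarith) _ _ _)
    (fun u hu => Real.rpow_nonneg (sub_nonneg.2 hu.2) _)
    (fun k => (Real.Gamma_pos_of_pos (by positivity)).le) ?_ ((hsum _).mul_left _)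
  · have h2 : ∫ u in (0 : ℝ)..x, (x - u) ^ (ρ - 2) * mlf ρ u =
      ∑' k : ℕ, (-1) ^ k * (Real.Gamma (ρ - 1) * x ^ (ρ - 1) *
        ((x ^ ρ) ^ k / Real.Gamma (ρ * k + ρ))) := key
    rw [h2, mlfDeriv, mul_neg, ← mul_assoc, ← tsum_mul_left]
    congr 1
    refine tsum_congr fun k => ?_
    rw [neg_pow (x ^ ρ)]
    ring
  · intro k
    have hc : ∀ u ∈ uIcc 0 x, (x - u) ^ (ρ - 2) * ((u ^ ρ) ^ k / Real.Gamma (ρ * k + 1)) =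
        (x - u) ^ ((ρ - 1) - 1) * u ^ ((ρ * k + 1) - 1) * (Real.Gamma (ρ * k + 1))⁻¹ := by
      intro u hu
      rw [uIcc_of_le hx] at hu
      rw [← Real.rpow_mul_natCast hu.1]
      ring_nf
    have h1 : 0 < Real.Gamma (ρ * k + 1) := Real.Gamma_pos_of_pos (by positivity)
    rw [intervalIntegral.integral_congr hc, intervalIntegral.integral_mul_const,
      integral_kernel_mul_rpow (by linarith) (by positivity) hx0,
      show ρ * k + 1 + (ρ - 1) = ρ * k + ρ by ring,
      show ρ * (k : ℝ) + ρ - 1 = (ρ - 1) + ρ * k by ring, Real.rpow_add hx0,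
      Real.rpow_mul_natCast hx]
    field_simp

/-! ### Positivity of the Volterra kernels -/

/-- The kernel `e^{-yz}` is of positive type: with `G(x) = ∫_0^x e^{yu} f(u) du`, the integrand is
`(e^{-2yx} G(x)² / 2)' + y e^{-2yx} G(x)²`. -/
lemma exp_kernel_nonneg {f : ℝ → ℝ} (hf : Continuous f) {y X : ℝ} (hy : 0 ≤ y) (hX : 0 ≤ X) :
    0 ≤ ∫ x in (0 : ℝ)..X, f x * ∫ u in (0 : ℝ)..x, Real.exp (-(y * (x - u))) * f u := by
  set G : ℝ → ℝ := fun x => ∫ u in (0 : ℝ)..x, Real.exp (y * u) * f u with hG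
  have hc : Continuous fun u => Real.exp (y * u) * f u := by fun_prop
  have hGd : ∀ x, HasDerivAt G (Real.exp (y * x) * f x) x := fun x => hc.integral_hasStrictDerivAt 0 x |>.hasDerivAt
  have hGc : Continuous G := continuous_iff_continuousAt.2 fun x => (hGd x).continuousAt
  have h1 : ∀ x, f x * ∫ u in (0 : ℝ)..x, Real.exp (-(y * (x - u))) * f u =
      Real.exp (-(y * x)) * f x * G x := by
    intro x
    have : ∀ u, Real.exp (-(y * (x - u))) * f u = Real.exp (-(y * x)) * (Real.exp (y * u) * f u) := by
      intro u
      rw [← mul_assoc, ← Real.exp_add]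
      ring_nf
    simp only [this, intervalIntegral.integral_const_mul, hG]
    ring
  simp only [h1]
  have hd : ∀ x, HasDerivAt (fun x => Real.exp (-(2 * y * x)) * G x ^ 2 / 2)
      (Real.exp (-(y * x)) * f x * G x - y * Real.exp (-(2 * y * x)) * G x ^ 2) x := by
    intro x
    have e1 : HasDerivAt (fun x => Real.exp (-(2 * y * x)))
        (Real.exp (-(2 * y * x)) * (-(2 * y * 1))) x :=
      (((hasDerivAt_id x).const_mul (2 * y)).neg).exp
    have e2 := ((e1.mul ((hGd x).pow 2)).div_const 2)
    refine e2.congr_deriv ?_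
    have : Real.exp (-(2 * y * x)) * Real.exp (y * x) = Real.exp (-(y * x)) := by
      rw [← Real.exp_add]; ring_nf
    rw [← this]
    simp only [Nat.cast_ofNat, Pi.pow_apply]
    ring
  have hi := intervalIntegral.integral_eq_sub_of_hasDerivAt (a := 0) (b := X) (fun x _ => hd x)
    (Continuous.intervalIntegrable (by fun_prop) _ _)
  rw [intervalIntegral.integral_sub (Continuous.intervalIntegrable (by fun_prop) _ _)
    (Continuous.intervalIntegrable (by fun_prop) _ _)] at hi
  have hG0 : G 0 = 0 := by simp [hG]
  have h2 : 0 ≤ ∫ x in (0 : ℝ)..X, y * Real.exp (-(2 * y * x)) * G x ^ 2 :=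
    intervalIntegral.integral_nonneg hX fun x _ => by positivity
  have h3 : 0 ≤ Real.exp (-(2 * y * X)) * G X ^ 2 / 2 := by positivity
  rw [hG0] at hi
  linarith

/-- Integrability of the singular kernel on the square, obtained from that of a convolution of two
integrable functions. -/
lemma integrable_kernel_prod {γ : ℝ} (hγ : γ < 1) (X : ℝ) :
    Integrable (fun p : ℝ × ℝ => if p.2 < p.1 then (p.1 - p.2) ^ (-γ) else 0)
      ((volume.restrict (Ioc 0 X)).prod (volume.restrict (Ioc 0 X))) := by
  rcases le_or_gt X 0 with hX | hX
  · simp [Ioc_eq_empty_of_le hX]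
  have h1 : Integrable ((Ioc 0 X).indicator fun _ => (1 : ℝ)) volume :=
    (integrable_indicator_iff measurableSet_Ioc).2 (by simp)
  have h2 : Integrable ((Ioc 0 X).indicator fun z : ℝ => z ^ (-γ)) volume :=
    (integrable_indicator_iff measurableSet_Ioc).2
      ((intervalIntegrable_iff_integrableOn_Ioc_of_le hX.le).1
        (intervalIntegral.intervalIntegrable_rpow' (by linarith)))
  have h3 := (h1.convolution_integrand (ContinuousLinearMap.mul ℝ ℝ) h2)
  have h4 := h3.mono_measure (μ := (volume.restrict (Ioc 0 X)).prod (volume.restrict (Ioc 0 X)))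
    (by
      rw [Measure.prod_restrict, ← Measure.volume_eq_prod]
      exact Measure.restrict_le_self)
  refine h4.congr ?_
  rw [Measure.prod_restrict]
  refine (ae_restrict_iff' (measurableSet_Ioc.prod measurableSet_Ioc)).2 (ae_of_all _ ?_)
  rintro ⟨x, u⟩ ⟨hx, hu⟩
  simp only at hx hu
  simp only [ContinuousLinearMap.mul_apply', indicator_of_mem hu, one_mul]
  split_ifs with h
  · have hxu : x - u ∈ Ioc 0 X := ⟨by linarith, by linarith [hx.2, hu.1]⟩
    exact indicator_of_mem hxu _
  · have hxu : x - u ∉ Ioc 0 X := fun hmem => h (by linarith [hmem.1])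
    exact indicator_of_notMem hxu _

lemma setIntegral_ite_lt {g : ℝ → ℝ} {x X : ℝ} (hx : x ∈ Ioc 0 X) :
    ∫ u in Ioc 0 X, (if u < x then g u else 0) = ∫ u in (0 : ℝ)..x, g u := by
  have : (fun u => if u < x then g u else 0) = (Iio x).indicator g := by
    ext u; simp [indicator]
  rw [this, setIntegral_indicator measurableSet_Iio, intervalIntegral.integral_of_le hx.1.le,
    integral_Ioc_eq_integral_Ioo]
  congr 2
  ext u
  simp only [mem_inter_iff, mem_Ioc, mem_Iio, mem_Ioo]
  constructor
  · rintro ⟨⟨a, b⟩, c⟩; exact ⟨a, c⟩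
  · rintro ⟨a, c⟩; exact ⟨⟨a, c.le.trans hx.2⟩, c⟩

/-- The kernel `z^{-γ}`, `0 < γ < 1`, is of positive type, as
`Γ(γ) z^{-γ} = ∫_0^∞ y^{γ-1} e^{-zy} dy` is a positive mixture of exponentials. -/
lemma rpow_kernel_nonneg {f : ℝ → ℝ} (hf : Continuous f) {γ X : ℝ} (hγ : 0 < γ) (hγ1 : γ < 1)
    (hX : 0 ≤ X) :
    0 ≤ ∫ x in (0 : ℝ)..X, f x * ∫ u in (0 : ℝ)..x, (x - u) ^ (-γ) * f u := by
  set μ : Measure ℝ := volume.restrict (Ioc 0 X) with hμ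
  set ν : Measure ℝ := volume.restrict (Ioi 0) with hν
  set H : (ℝ × ℝ) → ℝ → ℝ := fun p y =>
    if p.2 < p.1 then f p.1 * f p.2 * (y ^ (γ - 1) * Real.exp (-((p.1 - p.2) * y))) else 0 with hH
  have hHm : Measurable (Function.uncurry H) := by
    refine Measurable.ite (measurableSet_lt (by fun_prop) (by fun_prop)) ?_ measurable_const
    have := hf.measurable
    fun_prop
  have hΓ : ∀ z : ℝ, 0 < z → ∫ y, y ^ (γ - 1) * Real.exp (-(z * y)) ∂ν = z ^ (-γ) * Real.Gamma γ := by
    intro z hz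
    rw [hν, Real.integral_rpow_mul_exp_neg_mul_Ioi hγ hz, one_div, Real.inv_rpow hz.le,
      Real.rpow_neg hz.le]
  have hΓi : ∀ z : ℝ, 0 < z → Integrable (fun y => y ^ (γ - 1) * Real.exp (-(z * y))) ν := by
    intro z hz
    -- a nonintegrable function would have integral zero
    by_contra h
    have h1 := hΓ z hz
    rw [integral_undef h] at h1
    exact (mul_pos (Real.rpow_pos_of_pos hz _) (Real.Gamma_pos_of_pos hγ)).ne h1
  obtain ⟨M, hM⟩ := isCompact_Icc.exists_bound_of_continuousOn (s := Icc 0 X) hf.continuousOn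
  have hint : Integrable (Function.uncurry H) ((μ.prod μ).prod ν) := by
    rw [integrable_prod_iff hHm.aestronglyMeasurable]
    constructor
    · refine ae_of_all _ fun p => ?_
      simp only [Function.uncurry, hH]
      split_ifs with h
      · exact (hΓi _ (by linarith)).const_mul _
      · simp
    · have hb := (integrable_kernel_prod hγ1 X).const_mul (M * M * Real.Gamma γ)
      refine hb.mono' (hHm.norm.stronglyMeasurable.integral_prod_right.aestronglyMeasurable) ?_
      rw [Measure.prod_restrict]
      refine (ae_restrict_iff' (measurableSet_Ioc.prod measurableSet_Ioc)).2 (ae_of_all _ ?_)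
      rintro ⟨x, u⟩ ⟨hx, hu⟩
      simp only at hx hu
      simp only [Function.uncurry, hH]
      split_ifs with h
      · have hz : 0 < x - u := by linarith
        have e : ∫ y, ‖f x * f u * (y ^ (γ - 1) * Real.exp (-((x - u) * y)))‖ ∂ν =
            ‖f x‖ * ‖f u‖ * ((x - u) ^ (-γ) * Real.Gamma γ) := by
          rw [← hΓ _ hz, ← integral_const_mul]
          refine setIntegral_congr_fun measurableSet_Ioi fun y hy => ?_
          have : 0 ≤ y ^ (γ - 1) * Real.exp (-((x - u) * y)) :=
            mul_nonneg (Real.rpow_nonneg (le_of_lt hy) _) (Real.exp_pos _).le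
          simp only [norm_mul] at this ⊢
          rw [← norm_mul (y ^ _), Real.norm_of_nonneg this]
        have hg := Real.Gamma_pos_of_pos hγ
        have hp : 0 < (x - u) ^ (-γ) := Real.rpow_pos_of_pos hz _
        rw [e, Real.norm_of_nonneg (by positivity)]
        have h1 := hM x ⟨hx.1.le, hx.2⟩
        have h2 := hM u ⟨hu.1.le, hu.2⟩
        have h3 : 0 ≤ M := (norm_nonneg _).trans h1
        calc ‖f x‖ * ‖f u‖ * ((x - u) ^ (-γ) * Real.Gamma γ)
            ≤ M * M * ((x - u) ^ (-γ) * Real.Gamma γ) := by gcongr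
          _ = _ := by ring
      · simp
  have hswap := integral_integral_swap hint
  have hL : ∫ p, ∫ y, H p y ∂ν ∂(μ.prod μ) =
      Real.Gamma γ * ∫ x in (0 : ℝ)..X, f x * ∫ u in (0 : ℝ)..x, (x - u) ^ (-γ) * f u := by
    rw [integral_prod (fun p => ∫ y, H p y ∂ν) hint.integral_prod_left, intervalIntegral.integral_of_le hX,
      ← integral_const_mul]
    refine setIntegral_congr_fun measurableSet_Ioc fun x hx => ?_
    have : ∀ u, ∫ y, H (x, u) y ∂ν =
        if u < x then Real.Gamma γ * f x * ((x - u) ^ (-γ) * f u) else 0 := by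
      intro u
      simp only [hH]
      split_ifs with h
      · rw [integral_const_mul, hΓ _ (by linarith)]; ring
      · simp
    simp only [this]
    rw [hμ, setIntegral_ite_lt hx, intervalIntegral.integral_const_mul]
    ring
  have hR : 0 ≤ ∫ y, ∫ p, H p y ∂(μ.prod μ) ∂ν := by
    have hae := hint.prod_left_ae
    have hmem : ∀ᵐ y ∂ν, y ∈ Ioi (0 : ℝ) := ae_restrict_mem measurableSet_Ioi
    refine integral_nonneg_of_ae ?_
    filter_upwards [hae, hmem] with y hy1 hy
    simp only [Pi.zero_apply]
    rw [integral_prod (fun p => H p y) hy1]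
    have e : ∫ x, ∫ u, H (x, u) y ∂μ ∂μ = y ^ (γ - 1) *
        ∫ x in (0 : ℝ)..X, f x * ∫ u in (0 : ℝ)..x, Real.exp (-(y * (x - u))) * f u := by
      rw [intervalIntegral.integral_of_le hX, ← integral_const_mul]
      refine setIntegral_congr_fun measurableSet_Ioc fun x hx => ?_
      simp only [hH]
      rw [hμ, setIntegral_ite_lt hx, ← mul_assoc, ← intervalIntegral.integral_const_mul]
      congr 1
      ext u
      rw [mul_comm (x - u) y]
      ring
    rw [e]
    exact mul_nonneg (Real.rpow_nonneg (le_of_lt hy) _) (exp_kernel_nonneg hf (le_of_lt hy) hX)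
  rw [← hswap, hL] at hR
  exact nonneg_of_mul_nonneg_right hR (Real.Gamma_pos_of_pos hγ)

/-! ### Bounds on the relaxation function and its derivative -/

lemma hasDerivWithinAt_mlf {ρ x : ℝ} (hρ : 1 < ρ) (hx : 0 ≤ x) :
    HasDerivWithinAt (mlf ρ) (mlfDeriv ρ x) (Ici 0) x := by
  have h := (((continuous_mlfDeriv hρ).integral_hasStrictDerivAt 0 x).hasDerivAt.const_add
    1).hasDerivWithinAt (s := Ici 0)
  exact h.congr (fun y hy => mlf_eq_integral hρ hy) (mlf_eq_integral hρ hx)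

lemma mlf_zero {ρ : ℝ} (hρ : 1 < ρ) : mlf ρ 0 = 1 := by
  simpa using mlf_eq_integral hρ le_rfl

/-- Energy estimate: `(F²)' = 2 F F'` has nonpositive integral over every `[0, x]`. -/
lemma abs_mlf_le_one {ρ x : ℝ} (hρ : 1 < ρ) (hρ2 : ρ < 2) (hx : 0 ≤ x) : |mlf ρ x| ≤ 1 := by
  have hF := continuous_mlf hρ
  have hP := continuous_mlfDeriv hρ
  have hi := intervalIntegral.integral_eq_sub_of_hasDeriv_right_of_le hx
    (f := fun u => mlf ρ u ^ 2) (f' := fun u => 2 * (mlf ρ u * mlfDeriv ρ u))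
    (by fun_prop)
    (fun u hu => by
      have h := (((hasDerivWithinAt_mlf hρ hu.1.le).mono
        (Ioi_subset_Ici hu.1.le : Ioi u ⊆ Ici 0)).pow 2)
      refine h.congr_deriv ?_
      simp only [Nat.cast_ofNat]
      ring)
    (Continuous.intervalIntegrable (by fun_prop) _ _)
  have hpos := rpow_kernel_nonneg hF (γ := 2 - ρ) (by linarith) (by linarith) hx
  have hg : 0 < Real.Gamma (ρ - 1) := Real.Gamma_pos_of_pos (by linarith)
  have e : ∫ u in (0 : ℝ)..x, mlf ρ u * ∫ v in (0 : ℝ)..u, (u - v) ^ (-(2 - ρ)) * mlf ρ v =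
      -Real.Gamma (ρ - 1) * ∫ u in (0 : ℝ)..x, mlf ρ u * mlfDeriv ρ u := by
    rw [← intervalIntegral.integral_const_mul]
    refine intervalIntegral.integral_congr fun u hu => ?_
    rw [uIcc_of_le hx] at hu
    have := mlfDeriv_eq_integral hρ hu.1
    simp only [neg_sub]
    linear_combination (mlf ρ u) * this
  rw [e] at hpos
  have h0 : ∫ u in (0 : ℝ)..x, mlf ρ u * mlfDeriv ρ u ≤ 0 := by
    by_contra! h
    nlinarith [mul_pos hg h]
  rw [intervalIntegral.integral_const_mul, mlf_zero hρ] at hi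
  rw [← sq_le_one_iff_abs_le_one]
  linarith

/-- Uniform control of the oscillation of `F'` over intervals of length at most one. Splitting the
Volterra integral at `x`, both the shift of the kernel over `[0, x]` and the new piece over
`[x, x + h]` contribute at most `∫_0^h z^{ρ-2} dz = h^{ρ-1} / (ρ-1)`. -/
lemma abs_mlfDeriv_sub_le {ρ x h : ℝ} (hρ : 1 < ρ) (hρ2 : ρ < 2) (hx : 0 ≤ x) (hh : 0 ≤ h)
    (hh1 : h ≤ 1) :
    Real.Gamma (ρ - 1) * |mlfDeriv ρ (x + h) - mlfDeriv ρ x| ≤ 2 / (ρ - 1) := by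
  have hF := continuous_mlf hρ
  have hg : 0 < Real.Gamma (ρ - 1) := Real.Gamma_pos_of_pos (by linarith)
  have hK := intervalIntegrable_kernel (r := ρ - 2) (by linarith)
  have hKF : ∀ y a b, IntervalIntegrable (fun u => (y - u) ^ (ρ - 2) * mlf ρ u) volume a b :=
    fun y a b => (hK y a b).mul_continuousOn hF.continuousOn
  have hKi : ∀ y a b, ∫ u in a..b, (y - u) ^ (ρ - 2) =
      ((y - a) ^ (ρ - 1) - (y - b) ^ (ρ - 1)) / (ρ - 1) := by
    intro y a b
    rw [intervalIntegral.integral_comp_sub_left (fun z => z ^ (ρ - 2)) y,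
      integral_rpow (Or.inl (by linarith)), show ρ - 2 + 1 = ρ - 1 by ring]
  rw [← abs_of_pos hg, ← abs_mul, mul_sub, mlfDeriv_eq_integral hρ hx,
    mlfDeriv_eq_integral hρ (by linarith : 0 ≤ x + h),
    ← intervalIntegral.integral_add_adjacent_intervals (hKF (x + h) 0 x) (hKF (x + h) x (x + h))]
  have h1 : |∫ u in x..(x + h), (x + h - u) ^ (ρ - 2) * mlf ρ u| ≤ h ^ (ρ - 1) / (ρ - 1) := by
    have := intervalIntegral.norm_integral_le_of_norm_le (a := x) (b := x + h) (by linarith)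
      (f := fun u => (x + h - u) ^ (ρ - 2) * mlf ρ u) (g := fun u => (x + h - u) ^ (ρ - 2))
      (μ := volume) (ae_of_all _ fun u hu => ?_) (hK _ _ _)
    · rw [hKi] at this
      simpa [Real.zero_rpow (show ρ - 1 ≠ 0 by linarith)] using this
    · have a1 := abs_mlf_le_one hρ hρ2 (hx.trans hu.1.le)
      have a2 : 0 ≤ (x + h - u) ^ (ρ - 2) := Real.rpow_nonneg (by linarith [hu.2]) _
      rw [norm_mul, Real.norm_of_nonneg a2, Real.norm_eq_abs]
      exact mul_le_of_le_one_right a2 a1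
  have h2 : |∫ u in (0 : ℝ)..x, ((x - u) ^ (ρ - 2) * mlf ρ u - (x + h - u) ^ (ρ - 2) * mlf ρ u)| ≤
      h ^ (ρ - 1) / (ρ - 1) := by
    have := intervalIntegral.norm_integral_le_of_norm_le (a := 0) (b := x) hx
      (f := fun u => (x - u) ^ (ρ - 2) * mlf ρ u - (x + h - u) ^ (ρ - 2) * mlf ρ u)
      (g := fun u => (x - u) ^ (ρ - 2) - (x + h - u) ^ (ρ - 2))
      (μ := volume) ?_ ((hK _ _ _).sub (hK _ _ _))
    · rw [intervalIntegral.integral_sub (hK _ _ _) (hK _ _ _), hKi, hKi] at this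
      refine this.trans ?_
      rw [← sub_div]
      have m : x ^ (ρ - 1) ≤ (x + h) ^ (ρ - 1) := Real.rpow_le_rpow hx (by linarith) (by linarith)
      have : 0 < ρ - 1 := by linarith
      gcongr
      simp only [sub_zero, sub_self, Real.zero_rpow this.ne', add_sub_cancel_left]
      linarith
    · have hne : ∀ᵐ u : ℝ, u ≠ x := by simp [ae_iff, measure_singleton]
      -- the point `u = x` is discarded: there the kernel is `0 ^ (ρ - 2) = 0`, so not monotone
      filter_upwards [hne] with u hux hu
      have hlt : 0 < x - u := sub_pos.2 (lt_of_le_of_ne hu.2 hux)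
      have a1 := abs_mlf_le_one hρ hρ2 hu.1.le
      have a2 : (x + h - u) ^ (ρ - 2) ≤ (x - u) ^ (ρ - 2) :=
        Real.rpow_le_rpow_of_nonpos hlt (by linarith) (by linarith)
      rw [← sub_mul, norm_mul, Real.norm_of_nonneg (sub_nonneg.2 a2), Real.norm_eq_abs]
      exact mul_le_of_le_one_right (sub_nonneg.2 a2) a1
  rw [intervalIntegral.integral_sub (hKF _ _ _) (hKF _ _ _)] at h2
  have h3 : h ^ (ρ - 1) / (ρ - 1) ≤ 1 / (ρ - 1) := by
    have : 0 < ρ - 1 := by linarith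
    gcongr
    exact Real.rpow_le_one hh hh1 this.le
  have h4 : 2 / (ρ - 1) = 1 / (ρ - 1) + 1 / (ρ - 1) := by ring
  rw [abs_le] at h1 h2 ⊢
  constructor <;> linarith [h1.1, h1.2, h2.1, h2.2]

/-- `F'(x)` differs from the mean `F(x+1) - F(x)` of `F'` over `[x, x+1]` by at most its
oscillation there, and that mean is at most `2` in absolute value. -/
lemma exists_abs_mlfDeriv_le {ρ : ℝ} (hρ : 1 < ρ) (hρ2 : ρ < 2) :
    ∃ L : ℝ, ∀ x, 0 ≤ x → |mlfDeriv ρ x| ≤ L := by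
  have hg : 0 < Real.Gamma (ρ - 1) := Real.Gamma_pos_of_pos (by linarith)
  refine ⟨2 + 2 / (ρ - 1) / Real.Gamma (ρ - 1), fun x hx => ?_⟩
  have hP := continuous_mlfDeriv hρ
  have hd : mlf ρ (x + 1) - mlf ρ x = ∫ u in x..(x + 1), mlfDeriv ρ u := by
    rw [mlf_eq_integral hρ hx, mlf_eq_integral hρ (by linarith : 0 ≤ x + 1),
      add_sub_add_left_eq_sub, intervalIntegral.integral_interval_sub_left
        (hP.intervalIntegrable _ _) (hP.intervalIntegrable _ _)]
  have h1 : ‖∫ u in x..(x + 1), (mlfDeriv ρ u - mlfDeriv ρ x)‖ ≤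
      2 / (ρ - 1) / Real.Gamma (ρ - 1) * |x + 1 - x| := by
    refine intervalIntegral.norm_integral_le_of_norm_le_const fun u hu => ?_
    rw [uIoc_of_le (by linarith)] at hu
    rw [le_div_iff₀' hg]
    have := abs_mlfDeriv_sub_le hρ hρ2 hx (h := u - x) (by linarith [hu.1]) (by linarith [hu.2])
    rwa [add_sub_cancel] at this
  rw [intervalIntegral.integral_sub (hP.intervalIntegrable _ _) intervalIntegrable_const, ← hd,
    intervalIntegral.integral_const, Real.norm_eq_abs] at h1
  simp only [add_sub_cancel_left, abs_one, mul_one, smul_eq_mul, one_mul] at h1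
  have h2 := abs_le.1 (abs_mlf_le_one hρ hρ2 hx)
  have h3 := abs_le.1 (abs_mlf_le_one hρ hρ2 (by linarith : 0 ≤ x + 1))
  rw [abs_le] at h1 ⊢
  constructor <;> linarith [h1.1, h1.2, h2.1, h2.2, h3.1, h3.2]

lemma abs_mlf_sub_le {ρ L : ℝ} (hρ : 1 < ρ) (hL : ∀ x, 0 ≤ x → |mlfDeriv ρ x| ≤ L) {a b : ℝ}
    (ha : 0 ≤ a) (hb : 0 ≤ b) : |mlf ρ b - mlf ρ a| ≤ L * |b - a| :=
  (convex_Ici 0).norm_image_sub_le_of_norm_hasDerivWithin_le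
    (fun _ hx => hasDerivWithinAt_mlf hρ hx) hL ha hb

/-! ### The increment bound -/

/-- For `1 < ρ < 2` there exists a constant `C > 0`, depending only on `ρ`, such that
for every `α > 0`, `T > 0` and `0 ≤ s ≤ t ≤ T`, the second-moment increment of the
process `X(t) = ∫_0^t E_ρ(−α(t−u)^ρ) dW(u)` satisfies
`∫_0^s (E_ρ(−α(t−u)^ρ) − E_ρ(−α(s−u)^ρ))² du + ∫_s^t E_ρ(−α(t−u)^ρ)² du
  ≤ C (α^{2/ρ} T² + 1)(t − s)`. -/
theorem increment_bound (ρ : ℝ) (hρ₁ : 1 < ρ) (hρ₂ : ρ < 2) :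
    ∃ C : ℝ, 0 < C ∧ ∀ α : ℝ, 0 < α → ∀ T : ℝ, 0 < T →
      ∀ s t : ℝ, 0 ≤ s → s ≤ t → t ≤ T →
        (∫ u in (0 : ℝ)..s,
            (mittagLeffler ρ (-(α * (t - u) ^ ρ))
              - mittagLeffler ρ (-(α * (s - u) ^ ρ))) ^ 2)
          + ∫ u in s..t, (mittagLeffler ρ (-(α * (t - u) ^ ρ))) ^ 2
        ≤ C * (α ^ (2 / ρ) * T ^ 2 + 1) * (t - s) := by
  obtain ⟨L, hL⟩ := exists_abs_mlfDeriv_le hρ₁ hρ₂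
  refine ⟨L ^ 2 + 1, by positivity, fun α hα T hT s t hs hst htT => ?_⟩
  have hρ0 : ρ ≠ 0 := by linarith
  set l : ℝ := α ^ (1 / ρ) with hl
  have hl0 : 0 < l := Real.rpow_pos_of_pos hα _
  have hl2 : α ^ (2 / ρ) = l ^ 2 := by
    rw [hl, ← Real.rpow_mul_natCast hα.le]
    congr 1
    push_cast
    ring
  have hscale : ∀ z : ℝ, 0 ≤ z → mittagLeffler ρ (-(α * z ^ ρ)) = mlf ρ (l * z) := by
    intro z hz
    rw [mlf, Real.mul_rpow hl0.le hz, hl, ← Real.rpow_mul hα.le, one_div_mul_cancel hρ0,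
      Real.rpow_one]
  have h1 : ‖∫ u in (0 : ℝ)..s, (mittagLeffler ρ (-(α * (t - u) ^ ρ))
              - mittagLeffler ρ (-(α * (s - u) ^ ρ))) ^ 2‖ ≤ (L * (l * (t - s))) ^ 2 * |s - 0| := by
    refine intervalIntegral.norm_integral_le_of_norm_le_const fun u hu => ?_
    rw [uIoc_of_le hs] at hu
    have hsu : 0 ≤ s - u := by linarith [hu.2]
    have htu : 0 ≤ t - u := by linarith
    rw [hscale _ hsu, hscale _ htu, norm_pow, Real.norm_eq_abs]
    have := abs_mlf_sub_le hρ₁ hL (mul_nonneg hl0.le hsu) (mul_nonneg hl0.le htu)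
    rw [show l * (t - u) - l * (s - u) = l * (t - s) by ring,
      abs_of_nonneg (mul_nonneg hl0.le (sub_nonneg.2 hst))] at this
    gcongr
  have h2 : ‖∫ u in s..t, (mittagLeffler ρ (-(α * (t - u) ^ ρ))) ^ 2‖ ≤ 1 * |t - s| := by
    refine intervalIntegral.norm_integral_le_of_norm_le_const fun u hu => ?_
    rw [uIoc_of_le hst] at hu
    have htu : 0 ≤ t - u := by linarith [hu.2]
    rw [hscale _ htu, norm_pow, Real.norm_eq_abs]
    exact pow_le_one₀ (abs_nonneg _) (abs_mlf_le_one hρ₁ hρ₂ (mul_nonneg hl0.le htu))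
  have h1' := (le_abs_self _).trans h1
  have h2' := (le_abs_self _).trans h2
  rw [sub_zero, abs_of_nonneg hs] at h1'
  rw [one_mul, abs_of_nonneg (sub_nonneg.2 hst)] at h2'
  have hd : 0 ≤ t - s := sub_nonneg.2 hst
  have h3 : (L * (l * (t - s))) ^ 2 * s ≤ L ^ 2 * (l ^ 2 * T ^ 2) * (t - s) := by
    have : (t - s) * s ≤ T ^ 2 := by nlinarith
    calc (L * (l * (t - s))) ^ 2 * s = L ^ 2 * l ^ 2 * ((t - s) * s) * (t - s) := by ring
      _ ≤ L ^ 2 * l ^ 2 * T ^ 2 * (t - s) := by gcongr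
      _ = _ := by ring
  rw [hl2]
  have h4 : 0 ≤ l ^ 2 * T ^ 2 * (t - s) := by positivity
  have h5 : 0 ≤ L ^ 2 * (t - s) := by positivity
  nlinarith [h1', h2', h3, h4, h5]
end

section
/- Let 1 < ρ < 2. There exists a constant C > 0, depending only on ρ, such that for every α > 0 and every h > 0: ∫_0^∞ (E_ρ(−α(u + h)^ρ) − E_ρ(−α u^ρ))^2 du ≤ C · α^{1/ρ} · h^2. -/
/-!
The function `φ(t) = E_ρ(-t^ρ)` satisfies `|φ'(t)| ≤ K / (1 + t)` for `t > 0`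
(`exists_deriv_bound`). The mean value inequality then gives
`|φ(v + d) - φ(v)| ≤ K d / (1 + v)`, and since `E_ρ(-α u^ρ) = φ(l u)` with `l = α^(1/ρ)`, the
integral in question is at most `K² l² h² ∫_0^∞ (1 + l u)⁻² du = K² l h²`.

Near `0` the derivative bound is immediate from the power series. For large `t` it comes from the
Laplace transform: `H(t) = -t φ'(t)` (`scaledDeriv`) has the transform
`Ψ(s) = ρ s^(ρ-1) / (1 + s^ρ)²` (`symbol`), computed term by term for `Re s > 1`
(`laplace_scaledDeriv`), so Fourier inversion writes `2π H(t)` as the integral of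
`y ↦ e^(st) Ψ(s)`, `s = 2 + iy`, over the real line (`scaledDeriv_eq_integral`). Because `ρ < 2`,
`s^ρ` avoids `-1` in the right half-plane; there `Ψ` is holomorphic and `|Ψ(s)| ≤ M / (1 + (Im s)²)`
with `M` independent of `Re s` (`norm_symbol_le`). Cauchy's theorem (`integral_vertical_eq`)
moves the line of integration to `Re s = 1/t`, where `|e^(st)| = e`, and so `|H(t)| ≤ e M / 2`
for every `t`.
-/

open MeasureTheory

namespace MittagLefflerIncrement

/-! ### Power series of the Mittag-Leffler function and of its derivative -/

/-- The termwise derivative `∑ k x^(k-1) / Γ(ρ k + 1)` of the Mittag-Leffler series. -/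
noncomputable def mlDeriv (ρ x : ℝ) : ℝ :=
  ∑' k : ℕ, k * x ^ (k - 1) / Real.Gamma (ρ * k + 1)

lemma factorial_le_gamma {ρ : ℝ} (hρ : 1 < ρ) (k : ℕ) :
    (k.factorial : ℝ) ≤ Real.Gamma (ρ * k + 1) := by
  rcases Nat.eq_zero_or_pos k with rfl | hk
  · simp
  have hk' : (1 : ℝ) ≤ k := by exact_mod_cast hk
  rw [← Real.Gamma_nat_eq_factorial]
  refine Real.Gamma_strictMonoOn_Ici.monotoneOn ?_ ?_ ?_
  · simp only [Set.mem_Ici]; linarith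
  · simp only [Set.mem_Ici]; nlinarith
  · nlinarith

lemma gamma_pos {ρ : ℝ} (hρ : 1 < ρ) (k : ℕ) : 0 < Real.Gamma (ρ * k + 1) :=
  lt_of_lt_of_le (by exact_mod_cast k.factorial_pos) (factorial_le_gamma hρ k)

lemma hasSum_deriv_exp (R : ℝ) :
    HasSum (fun k : ℕ => k * R ^ (k - 1) / (k.factorial : ℝ)) (Real.exp R) := by
  rw [← hasSum_nat_add_iff' 1]
  have h := NormedSpace.expSeries_div_hasSum_exp R
  rw [← Real.exp_eq_exp_ℝ] at h
  simp only [Finset.range_one, Finset.sum_singleton, Nat.cast_zero, zero_mul, zero_div, sub_zero]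
  convert! h using 2 with k
  rw [Nat.factorial_succ]
  have : (k.factorial : ℝ) ≠ 0 := by exact_mod_cast k.factorial_ne_zero
  push_cast
  field_simp

lemma deriv_term_bound {ρ : ℝ} (hρ : 1 < ρ) {x R : ℝ} (hx : |x| ≤ R) (k : ℕ) :
    ‖k * x ^ (k - 1) / Real.Gamma (ρ * k + 1)‖ ≤ k * R ^ (k - 1) / (k.factorial : ℝ) := by
  have hf : (0 : ℝ) < k.factorial := by exact_mod_cast k.factorial_pos
  have h1 := factorial_le_gamma hρ k
  have hR : 0 ≤ R := (abs_nonneg x).trans hx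
  rw [norm_div, norm_mul, norm_pow, Real.norm_eq_abs, Real.norm_eq_abs, Real.norm_eq_abs,
    abs_of_pos (gamma_pos hρ k), Nat.abs_cast]
  gcongr

lemma hasDerivAt_mittagLeffler {ρ : ℝ} (hρ : 1 < ρ) (x : ℝ) :
    HasDerivAt (mittagLeffler ρ) (mlDeriv ρ x) x := by
  have hx : x ∈ Metric.ball (0 : ℝ) (|x| + 1) := by simp
  refine hasDerivAt_tsum_of_isPreconnected
    (u := fun k : ℕ => k * (|x| + 1) ^ (k - 1) / (k.factorial : ℝ)) (t := Metric.ball (0 : ℝ) (|x| + 1)) (y₀ := 0)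
    (hasSum_deriv_exp (|x| + 1)).summable Metric.isOpen_ball
    (convex_ball (0 : ℝ) (|x| + 1)).isPreconnected
    (g := fun k y => y ^ k / Real.Gamma (ρ * k + 1))
    (g' := fun k y => k * y ^ (k - 1) / Real.Gamma (ρ * k + 1)) ?_ ?_ ?_ ?_ hx
  · intro n y _
    exact (hasDerivAt_pow n y).div_const _
  · intro n y hy
    exact deriv_term_bound hρ (by simpa using (Metric.mem_ball.1 hy).le) n
  · simp; positivity
  · refine summable_of_ne_finset_zero (s := {0}) fun k hk => ?_
    simp at hk
    simp [hk]

lemma summable_mlDeriv {ρ : ℝ} (hρ : 1 < ρ) (x : ℝ) :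
    Summable fun k : ℕ => k * x ^ (k - 1) / Real.Gamma (ρ * k + 1) :=
  Summable.of_norm_bounded (hasSum_deriv_exp |x|).summable (deriv_term_bound hρ le_rfl)

lemma abs_mlDeriv_le {ρ : ℝ} (hρ : 1 < ρ) (x : ℝ) : |mlDeriv ρ x| ≤ Real.exp |x| :=
  tsum_of_norm_bounded (hasSum_deriv_exp |x|) (deriv_term_bound hρ le_rfl)

lemma continuous_mlDeriv {ρ : ℝ} (hρ : 1 < ρ) : Continuous (mlDeriv ρ) := by
  rw [continuous_iff_continuousAt]
  intro x
  have h : ContinuousOn (mlDeriv ρ) (Metric.ball 0 (|x| + 1)) := by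
    refine continuousOn_tsum (fun k => ?_) (hasSum_deriv_exp (|x| + 1)).summable ?_
    · fun_prop
    · intro n y hy
      exact deriv_term_bound hρ (by simpa using (Metric.mem_ball.1 hy).le) n
  exact h.continuousAt (Metric.isOpen_ball.mem_nhds (by simp))

/-- `-t` times the derivative of `t ↦ E_ρ(-t^ρ)`; its Laplace transform is
`ρ s^(ρ-1) / (1 + s^ρ)²`. -/
noncomputable def scaledDeriv (ρ t : ℝ) : ℝ := ρ * t ^ ρ * mlDeriv ρ (-t ^ ρ)

lemma hasDerivAt_comp {ρ : ℝ} (hρ : 1 < ρ) {t : ℝ} (ht : 0 < t) :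
    HasDerivAt (fun t => mittagLeffler ρ (-t ^ ρ)) (-(scaledDeriv ρ t / t)) t := by
  have h := (hasDerivAt_mittagLeffler hρ (-t ^ ρ)).comp t
    (Real.hasDerivAt_rpow_const (p := ρ) (Or.inl ht.ne')).neg
  convert! h using 1
  rw [scaledDeriv, Real.rpow_sub_one ht.ne']
  ring

lemma hasSum_scaledDeriv {ρ : ℝ} (hρ : 1 < ρ) {t : ℝ} (ht : 0 < t) :
    HasSum (fun k : ℕ => -(-1) ^ k * (ρ * k) * t ^ (ρ * k) / Real.Gamma (ρ * k + 1))
      (scaledDeriv ρ t) := by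
  have h : HasSum _ (scaledDeriv ρ t) :=
    (summable_mlDeriv hρ (-t ^ ρ)).hasSum.mul_left (ρ * t ^ ρ)
  convert h using 2 with k
  rcases k with _ | k
  · simp
  · rw [Real.rpow_mul ht.le, Real.rpow_natCast, Nat.add_sub_cancel, neg_pow (t ^ ρ)]
    ring

/-! ### The Laplace symbol in the right half-plane -/

/-- The Laplace transform `ρ s^(ρ-1) / (1 + s^ρ)²` of `scaledDeriv ρ`. -/
noncomputable def symbol (ρ : ℝ) (s : ℂ) : ℂ :=
  ρ * s ^ ((ρ - 1 : ℝ) : ℂ) / (1 + s ^ (ρ : ℂ)) ^ 2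

/-- On the right half-plane `|arg s| ≤ π/2`, so `s^ρ` stays in a sector around the positive axis of
half-opening `ρπ/2 < π`, and hence away from `-1`. -/
lemma normSq_one_add_cpow_ge {ρ : ℝ} (hρ₁ : 1 < ρ) (hρ₂ : ρ < 2) {s : ℂ} (hs : 0 < s.re) :
    (1 + Real.cos (ρ * (Real.pi / 2))) * (1 + (‖s‖ ^ ρ) ^ 2) ≤ ‖1 + s ^ (ρ : ℂ)‖ ^ 2 := by
  have hpi := Real.pi_pos
  have hcos : Real.cos (ρ * (Real.pi / 2)) ≤ Real.cos (s.arg * ρ) := by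
    rw [← Real.cos_abs (s.arg * ρ), abs_mul, abs_of_pos (by linarith : 0 < ρ), mul_comm ρ]
    have := Complex.abs_arg_le_pi_div_two_iff.2 hs.le
    refine Real.cos_le_cos_of_nonneg_of_le_pi (by positivity) (by nlinarith) ?_
    gcongr
  have hneg : Real.cos (ρ * (Real.pi / 2)) ≤ 0 :=
    Real.cos_nonpos_of_pi_div_two_le_of_le (by nlinarith) (by nlinarith)
  have hx : 0 ≤ ‖s‖ ^ ρ := by positivity
  rw [← Complex.normSq_eq_norm_sq, Complex.normSq_apply]
  simp only [Complex.add_re, Complex.add_im, Complex.one_re, Complex.one_im,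
    Complex.cpow_ofReal_re, Complex.cpow_ofReal_im]
  have h1 := Real.sin_sq_add_cos_sq (s.arg * ρ)
  set x := ‖s‖ ^ ρ
  set c := Real.cos (s.arg * ρ)
  have h2 : (1 + x * c) * (1 + x * c) + (0 + x * Real.sin (s.arg * ρ)) * (0 + x * Real.sin (s.arg * ρ))
      = 1 + 2 * x * c + x ^ 2 := by linear_combination x ^ 2 * h1
  rw [h2]
  nlinarith [mul_le_mul_of_nonneg_left hcos hx, mul_nonneg (neg_nonneg.2 hneg) (sq_nonneg (1 - x))]

lemma one_add_cos_pos {ρ : ℝ} (hρ₁ : 1 < ρ) (hρ₂ : ρ < 2) :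
    0 < 1 + Real.cos (ρ * (Real.pi / 2)) := by
  have hpi := Real.pi_pos
  have := Real.cos_lt_cos_of_nonneg_of_le_pi (x := ρ * (Real.pi / 2)) (y := Real.pi)
    (by positivity) le_rfl (by nlinarith)
  rw [Real.cos_pi] at this
  linarith

lemma one_add_cpow_ne_zero {ρ : ℝ} (hρ₁ : 1 < ρ) (hρ₂ : ρ < 2) {s : ℂ} (hs : 0 < s.re) :
    1 + s ^ (ρ : ℂ) ≠ 0 := by
  intro h
  have h1 := normSq_one_add_cpow_ge hρ₁ hρ₂ hs
  have h2 := one_add_cos_pos hρ₁ hρ₂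
  rw [h] at h1
  have : 0 < (1 + Real.cos (ρ * (Real.pi / 2))) * (1 + (‖s‖ ^ ρ) ^ 2) := by positivity
  simp at h1
  linarith

lemma rpow_ratio_bound {ρ r : ℝ} (hρ : 1 < ρ) (hr : 0 < r) :
    r ^ (ρ - 1) * (1 + r ^ 2) ≤ 2 * (1 + (r ^ ρ) ^ 2) := by
  rcases le_total r 1 with h | h
  · have h1 : r ^ (ρ - 1) ≤ 1 := Real.rpow_le_one hr.le h (by linarith)
    have h2 : 0 ≤ r ^ (ρ - 1) := by positivity
    nlinarith [sq_nonneg (r ^ ρ)]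
  · have h1 : r ^ (ρ - 1) * r ^ 2 ≤ (r ^ ρ) ^ 2 := by
      rw [← Real.rpow_natCast r, ← Real.rpow_add hr, ← Real.rpow_natCast, ← Real.rpow_mul hr.le]
      exact Real.rpow_le_rpow_of_exponent_le h (by push_cast; linarith)
    have h2 : r ^ (ρ - 1) ≤ r ^ (ρ - 1) * r ^ 2 :=
      le_mul_of_one_le_right (by positivity) (by nlinarith)
    nlinarith

/-- The bound is uniform in `Re s > 0`, and integrable along vertical lines. -/
lemma norm_symbol_le {ρ : ℝ} (hρ₁ : 1 < ρ) (hρ₂ : ρ < 2) {s : ℂ} (hs : 0 < s.re) :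
    ‖symbol ρ s‖ ≤ 2 * ρ / (1 + Real.cos (ρ * (Real.pi / 2))) * (1 + s.im ^ 2)⁻¹ := by
  have hs0 : s ≠ 0 := by rintro rfl; simp at hs
  have hr : 0 < ‖s‖ := norm_pos_iff.2 hs0
  have hκ := one_add_cos_pos hρ₁ hρ₂
  have h1 := normSq_one_add_cpow_ge hρ₁ hρ₂ hs
  have h2 := rpow_ratio_bound hρ₁ hr
  have him : s.im ^ 2 ≤ ‖s‖ ^ 2 := by
    rw [← sq_abs s.im]; gcongr; exact Complex.abs_im_le_norm s
  set κ := 1 + Real.cos (ρ * (Real.pi / 2))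
  have hn : ‖s ^ ((ρ - 1 : ℝ) : ℂ)‖ = ‖s‖ ^ (ρ - 1) := by
    rw [Complex.norm_cpow_of_ne_zero hs0]; simp
  rw [symbol, norm_div, norm_mul, norm_pow, hn, Complex.norm_real, Real.norm_of_nonneg (by linarith)]
  have hd : 0 < κ * (1 + (‖s‖ ^ ρ) ^ 2) := by positivity
  calc ρ * ‖s‖ ^ (ρ - 1) / ‖1 + s ^ (ρ : ℂ)‖ ^ 2
      ≤ ρ * ‖s‖ ^ (ρ - 1) / (κ * (1 + (‖s‖ ^ ρ) ^ 2)) := by gcongr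
    _ ≤ 2 * ρ / κ * (1 + s.im ^ 2)⁻¹ := by
      rw [← div_eq_mul_inv, div_div, div_le_div_iff₀ hd (by positivity)]
      have h3 : ‖s‖ ^ (ρ - 1) * (1 + s.im ^ 2) ≤ 2 * (1 + (‖s‖ ^ ρ) ^ 2) :=
        le_trans (by gcongr) h2
      have := mul_le_mul_of_nonneg_left h3 (by positivity : 0 ≤ ρ * κ)
      linarith

lemma differentiableAt_symbol {ρ : ℝ} (hρ₁ : 1 < ρ) (hρ₂ : ρ < 2) {s : ℂ} (hs : 0 < s.re) :
    DifferentiableAt ℂ (symbol ρ) s := by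
  have hs' : s ∈ Complex.slitPlane := Or.inl hs
  have h (a : ℂ) : DifferentiableAt ℂ (fun z : ℂ => z ^ a) s :=
    differentiableAt_id.cpow_const hs'
  exact ((h _).const_mul _).div (((h _).const_add 1).pow 2)
    (pow_ne_zero 2 (one_add_cpow_ne_zero hρ₁ hρ₂ hs))

/-- The integral of a holomorphic function along vertical lines does not depend on the line, when
the function is `O(1 / (1 + (Im s)²))` on the closed strip between the lines: Cauchy's theorem for
rectangles, whose horizontal sides disappear in the limit. -/
lemma integral_vertical_eq {G : ℂ → ℂ} {a b M : ℝ} (hab : a ≤ b)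
    (hG : ∀ s : ℂ, a ≤ s.re → s.re ≤ b → DifferentiableAt ℂ G s)
    (hM : ∀ s : ℂ, a ≤ s.re → s.re ≤ b → ‖G s‖ ≤ M * (1 + s.im ^ 2)⁻¹) :
    ∫ y : ℝ, G (a + y * Complex.I) = ∫ y : ℝ, G (b + y * Complex.I) := by
  have hint (c : ℝ) (h1 : a ≤ c) (h2 : c ≤ b) : Integrable fun y : ℝ => G (c + y * Complex.I) := by
    refine (integrable_inv_one_add_sq.const_mul M).mono' ?_ (ae_of_all _ fun y => ?_)
    · refine Continuous.aestronglyMeasurable ?_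
      rw [continuous_iff_continuousAt]
      intro y
      refine ContinuousAt.comp (f := fun y : ℝ => (c + y * Complex.I : ℂ)) (g := G) ?_ ?_
      · exact (hG _ (by simpa using h1) (by simpa using h2)).continuousAt
      · fun_prop
    · simpa using hM (c + y * Complex.I) (by simpa using h1) (by simpa using h2)
  have hlim (c : ℝ) (h1 : a ≤ c) (h2 : c ≤ b) :=
    intervalIntegral_tendsto_integral (hint c h1 h2) Filter.tendsto_neg_atTop_atBot
      Filter.tendsto_id
  have hor (T : ℝ) : ‖∫ x in a..b, G (x + T * Complex.I)‖ ≤ M * (1 + T ^ 2)⁻¹ * |b - a| := by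
    refine intervalIntegral.norm_integral_le_of_norm_le_const fun x hx => ?_
    rw [Set.uIoc_of_le hab] at hx
    simpa using hM (x + T * Complex.I) (by simpa using hx.1.le) (by simpa using hx.2)
  have hz : Filter.Tendsto (fun T : ℝ => M * (1 + T ^ 2)⁻¹ * |b - a|) Filter.atTop (nhds 0) := by
    have : Filter.Tendsto (fun T : ℝ => (1 + T ^ 2)⁻¹) Filter.atTop (nhds 0) :=
      (Filter.tendsto_atTop_add_const_left _ _
        (Filter.tendsto_pow_atTop two_ne_zero)).inv_tendsto_atTop
    simpa using (this.const_mul M).mul_const |b - a|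
  have hor1 : Filter.Tendsto (fun T : ℝ => ∫ x in a..b, G (x + T * Complex.I))
      Filter.atTop (nhds 0) := squeeze_zero_norm hor hz
  have hor2 : Filter.Tendsto (fun T : ℝ => ∫ x in a..b, G (x + (-T : ℝ) * Complex.I))
      Filter.atTop (nhds 0) :=
    squeeze_zero_norm (fun T => by simpa using hor (-T)) hz
  have hrect (T : ℝ) := Complex.integral_boundary_rect_eq_zero_of_differentiableOn G
    (a + (-T : ℝ) * Complex.I) (b + T * Complex.I) (by
      intro s hs
      have h := hs.1
      simp [Set.uIcc_of_le hab] at h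
      exact (hG s h.1 h.2).differentiableWithinAt)
  have htot := ((hor2.sub hor1).add ((hlim b hab le_rfl).const_smul Complex.I)).sub
    ((hlim a le_rfl hab).const_smul Complex.I)
  have h0 := tendsto_nhds_unique htot (tendsto_const_nhds.congr fun T => by
    simpa using (hrect T).symm)
  simp only [sub_zero, zero_add, smul_eq_mul, ← mul_sub] at h0
  rcases mul_eq_zero.1 h0 with h | h
  · exact absurd h Complex.I_ne_zero
  · exact (sub_eq_zero.1 h).symm

/-! ### Laplace transforms of powers -/

lemma integrableOn_rpow_mul_exp {a r : ℝ} (ha : 0 ≤ a) (hr : 0 < r) :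
    IntegrableOn (fun t : ℝ => t ^ a * Real.exp (-r * t)) (Set.Ioi 0) := by
  simpa using integrableOn_rpow_mul_exp_neg_mul_rpow (p := 1) (s := a) (b := r)
    (by linarith) one_pos hr

lemma norm_kernel (a : ℝ) (s : ℂ) {t : ℝ} (ht : 0 < t) :
    ‖((t ^ a : ℝ) : ℂ) * Complex.exp (-s * t)‖ = t ^ a * Real.exp (-s.re * t) := by
  rw [norm_mul, Complex.norm_real, Complex.norm_exp, Real.norm_of_nonneg (by positivity)]
  simp

lemma continuousOn_kernel (a : ℝ) (s : ℂ) :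
    ContinuousOn (fun t : ℝ => ((t ^ a : ℝ) : ℂ) * Complex.exp (-s * t)) (Set.Ioi 0) := by
  refine ContinuousOn.mul (Complex.continuous_ofReal.comp_continuousOn ?_) (by fun_prop)
  exact continuousOn_id.rpow_const fun t ht => Or.inl (ne_of_gt ht)

lemma integrableOn_kernel {a : ℝ} (ha : 0 ≤ a) {s : ℂ} (hs : 0 < s.re) :
    IntegrableOn (fun t : ℝ => ((t ^ a : ℝ) : ℂ) * Complex.exp (-s * t)) (Set.Ioi 0) := by
  refine Integrable.mono' (integrableOn_rpow_mul_exp ha hs)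
    ((continuousOn_kernel a s).aestronglyMeasurable measurableSet_Ioi) ?_
  filter_upwards [ae_restrict_mem measurableSet_Ioi] with t ht
  exact (norm_kernel a s ht).le

lemma differentiableAt_laplace_rpow {a : ℝ} (ha : 0 ≤ a) {s : ℂ} (hs : 0 < s.re) :
    DifferentiableAt ℂ (fun s : ℂ => ∫ t in Set.Ioi (0 : ℝ),
      ((t ^ a : ℝ) : ℂ) * Complex.exp (-s * t)) s := by
  have hs2 : 0 < s.re / 2 := by linarith
  refine (hasDerivAt_integral_of_dominated_loc_of_deriv_le
    (μ := volume.restrict (Set.Ioi (0 : ℝ)))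
    (F := fun (z : ℂ) (t : ℝ) => ((t ^ a : ℝ) : ℂ) * Complex.exp (-z * t))
    (F' := fun z t => ((t ^ a : ℝ) : ℂ) * (Complex.exp (-z * t) * (-1 * t)))
    (bound := fun t => t ^ (a + 1) * Real.exp (-(s.re / 2) * t))
    (Metric.ball_mem_nhds s hs2) ?_ (integrableOn_kernel ha hs) ?_ ?_
    (integrableOn_rpow_mul_exp (by linarith) hs2) ?_).2.differentiableAt
  · exact Filter.Eventually.of_forall fun z =>
      (continuousOn_kernel a z).aestronglyMeasurable measurableSet_Ioi
  · refine ContinuousOn.aestronglyMeasurable ?_ measurableSet_Ioi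
    refine ContinuousOn.mul (Complex.continuous_ofReal.comp_continuousOn ?_) (by fun_prop)
    exact continuousOn_id.rpow_const fun t ht => Or.inl (ne_of_gt ht)
  · filter_upwards [ae_restrict_mem measurableSet_Ioi] with t ht z hz
    have ht' : 0 < t := ht
    have hz' : s.re / 2 ≤ z.re := by
      have h1 := (Complex.abs_re_le_norm (z - s)).trans (mem_ball_iff_norm.1 hz).le
      have h2 := (abs_le.1 h1).1
      simp at h2
      linarith
    rw [← mul_assoc, norm_mul, norm_kernel a z ht', Real.rpow_add_one ht'.ne']
    have h3 : ‖(-1 * t : ℂ)‖ = t := by simp [abs_of_pos ht']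
    rw [h3, mul_assoc, mul_assoc, mul_comm t]
    gcongr
  · refine ae_of_all _ fun t z _ => ?_
    refine HasDerivAt.const_mul _ (HasDerivAt.cexp ?_)
    exact ((hasDerivAt_id z).neg).mul_const (t : ℂ)

/-- The Laplace transform of `t^a` at a complex point, by analytic continuation from the positive
real axis. -/
lemma laplace_rpow {a : ℝ} (ha : 0 ≤ a) {s : ℂ} (hs : 0 < s.re) :
    ∫ t in Set.Ioi (0 : ℝ), ((t ^ a : ℝ) : ℂ) * Complex.exp (-s * t)
      = Real.Gamma (a + 1) * s ^ (-(a + 1) : ℂ) := by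
  set U : Set ℂ := {s | 0 < s.re}
  have hU : IsOpen U := isOpen_lt continuous_const Complex.continuous_re
  have hf : AnalyticOnNhd ℂ (fun s : ℂ => ∫ t in Set.Ioi (0 : ℝ),
      ((t ^ a : ℝ) : ℂ) * Complex.exp (-s * t)) U :=
    DifferentiableOn.analyticOnNhd
      (fun s hs => (differentiableAt_laplace_rpow ha hs).differentiableWithinAt) hU
  have hg : AnalyticOnNhd ℂ (fun s : ℂ => Real.Gamma (a + 1) * s ^ (-(a + 1) : ℂ)) U := by
    refine DifferentiableOn.analyticOnNhd (fun s hs => ?_) hU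
    exact ((differentiableAt_id.cpow_const (Or.inl hs)).const_mul _).differentiableWithinAt
  have hreal (r : ℝ) (hr : 0 < r) :
      ∫ t in Set.Ioi (0 : ℝ), ((t ^ a : ℝ) : ℂ) * Complex.exp (-(r : ℂ) * t)
        = Real.Gamma (a + 1) * (r : ℂ) ^ (-(a + 1) : ℂ) := by
    have h := Real.integral_rpow_mul_exp_neg_mul_Ioi (a := a + 1) (by linarith) hr
    rw [one_div, Real.inv_rpow hr.le, ← Real.rpow_neg hr.le] at h
    have h2 := congrArg (fun x : ℝ => (x : ℂ)) h
    simp only [← integral_complex_ofReal] at h2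
    push_cast [Complex.ofReal_cpow hr.le] at h2
    rw [mul_comm, ← h2]
    refine setIntegral_congr_fun measurableSet_Ioi fun t _ => ?_
    simp
  refine hf.eqOn_of_preconnected_of_frequently_eq hg
    (convex_halfSpace_re_gt 0).isPreconnected (z₀ := 1) (by simp [U]) ?_ hs
  have ht : Filter.Tendsto (fun n : ℕ => ((1 + 1 / ((n : ℝ) + 1) : ℝ) : ℂ)) Filter.atTop
      (nhdsWithin 1 {1}ᶜ) := by
    refine tendsto_nhdsWithin_iff.2 ⟨?_, Filter.Eventually.of_forall fun n => ?_⟩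
    · have := (tendsto_one_div_add_atTop_nhds_zero_nat (𝕜 := ℝ)).const_add 1
      rw [add_zero] at this
      exact_mod_cast (Complex.continuous_ofReal.tendsto 1).comp this
    · have : (0 : ℝ) < 1 / ((n : ℝ) + 1) := by positivity
      intro h
      have h' : 1 + 1 / ((n : ℝ) + 1) = 1 := Complex.ofReal_injective h
      linarith
  refine ht.frequently (Filter.Frequently.of_forall fun n => ?_)
  exact hreal _ (by positivity)

/-! ### Laplace transform of the scaled derivative -/

/-- An almost everywhere convergent series of functions whose `L¹` norms are summable has an
integrable sum. -/
lemma integrable_of_hasSum {α : Type*} [MeasurableSpace α] {μ : Measure α} {F : ℕ → α → ℂ}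
    {f : α → ℂ} (hF : ∀ i, Integrable (F i) μ) (hS : Summable fun i => ∫ a, ‖F i a‖ ∂μ)
    (hf : AEStronglyMeasurable f μ) (h : ∀ᵐ a ∂μ, HasSum (F · a) (f a)) : Integrable f μ := by
  refine ⟨hf, ?_⟩
  have hi (i : ℕ) : ∫⁻ a, ‖F i a‖ₑ ∂μ = ENNReal.ofReal (∫ a, ‖F i a‖ ∂μ) :=
    (ofReal_integral_norm_eq_lintegral_enorm (hF i)).symm
  calc ∫⁻ a, ‖f a‖ₑ ∂μ ≤ ∫⁻ a, ∑' i, ‖F i a‖ₑ ∂μ := by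
        refine lintegral_mono_ae (h.mono fun a ha => ?_)
        rw [← ha.tsum_eq]
        exact enorm_tsum_le_tsum_enorm
    _ = ∑' i, ∫⁻ a, ‖F i a‖ₑ ∂μ := lintegral_tsum fun i => (hF i).1.enorm
    _ = ENNReal.ofReal (∑' i, ∫ a, ‖F i a‖ ∂μ) := by
        simp_rw [hi]
        exact (ENNReal.ofReal_tsum_of_nonneg (fun i => by positivity) hS).symm
    _ < ⊤ := ENNReal.ofReal_lt_top

lemma continuousOn_scaledDeriv {ρ : ℝ} (hρ : 1 < ρ) :
    ContinuousOn (scaledDeriv ρ) (Set.Ioi 0) := by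
  have h : ContinuousOn (fun t : ℝ => t ^ ρ) (Set.Ioi 0) :=
    continuousOn_id.rpow_const fun t ht => Or.inl (ne_of_gt ht)
  exact (continuousOn_const.mul h).mul ((continuous_mlDeriv hρ).comp_continuousOn h.neg)

/-- For `Re s > 1` the Laplace transform can be computed term by term, and the resulting series is
`∑ k q^k` with `q = -s^(-ρ)`. -/
lemma laplace_scaledDeriv {ρ : ℝ} (hρ : 1 < ρ) {s : ℂ} (hs : 1 < s.re) :
    IntegrableOn (fun t : ℝ => (scaledDeriv ρ t : ℂ) * Complex.exp (-s * t)) (Set.Ioi 0) ∧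
    ∫ t in Set.Ioi (0 : ℝ), (scaledDeriv ρ t : ℂ) * Complex.exp (-s * t) = symbol ρ s := by
  have hs0 : 0 < s.re := by linarith
  have hsne : s ≠ 0 := by rintro rfl; simp at hs0
  set c : ℕ → ℝ := fun k => -(-1) ^ k * (ρ * k) / Real.Gamma (ρ * k + 1)
  set F : ℕ → ℝ → ℂ := fun k t => (c k : ℂ) * (((t ^ (ρ * k) : ℝ) : ℂ) * Complex.exp (-s * t))
  have hexp (k : ℕ) : 0 ≤ ρ * k := by positivity
  have hint (k : ℕ) : IntegrableOn (F k) (Set.Ioi 0) := (integrableOn_kernel (hexp k) hs0).const_mul _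
  have hnorm (k : ℕ) : ∫ t in Set.Ioi (0 : ℝ), ‖F k t‖ = ρ * s.re⁻¹ * (k * (s.re ^ (-ρ)) ^ k) := by
    have h := Real.integral_rpow_mul_exp_neg_mul_Ioi (a := ρ * k + 1) (by linarith [hexp k]) hs0
    have h1 : ∫ t in Set.Ioi (0 : ℝ), ‖F k t‖
        = |c k| * ∫ t in Set.Ioi (0 : ℝ), t ^ (ρ * k + 1 - 1) * Real.exp (-(s.re * t)) := by
      rw [← integral_const_mul]
      refine setIntegral_congr_fun measurableSet_Ioi fun t ht => ?_
      simp only [F]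
      rw [norm_mul, norm_kernel _ _ ht, Complex.norm_real, Real.norm_eq_abs]
      simp
    have hΓ := gamma_pos hρ k
    have hc : |c k| = ρ * k / Real.Gamma (ρ * k + 1) := by
      simp only [c]
      rw [abs_div, abs_mul, abs_neg, abs_pow, abs_neg, abs_one, one_pow, one_mul,
        abs_of_nonneg (hexp k), abs_of_pos hΓ]
    rw [h1, h, hc, one_div, Real.inv_rpow hs0.le, Real.rpow_add hs0, Real.rpow_one,
      ← Real.rpow_natCast, ← Real.rpow_mul hs0.le, neg_mul, Real.rpow_neg hs0.le]
    field_simp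
  have hq : s.re ^ (-ρ) < 1 := Real.rpow_lt_one_of_one_lt_of_neg hs (by linarith)
  have hsum : Summable fun k => ∫ t in Set.Ioi (0 : ℝ), ‖F k t‖ := by
    simp_rw [hnorm]
    refine Summable.mul_left _ (hasSum_coe_mul_geometric_of_norm_lt_one ?_).summable
    rwa [Real.norm_of_nonneg (by positivity)]
  have hF (t : ℝ) (ht : 0 < t) :
      HasSum (F · t) ((scaledDeriv ρ t : ℂ) * Complex.exp (-s * t)) := by
    have h := (Complex.hasSum_ofReal.2 (hasSum_scaledDeriv hρ ht)).mul_right (Complex.exp (-s * t))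
    refine h.congr_fun fun k => ?_
    simp only [F, c]
    push_cast
    ring
  have hae : ∀ᵐ t ∂volume.restrict (Set.Ioi (0 : ℝ)),
      HasSum (F · t) ((scaledDeriv ρ t : ℂ) * Complex.exp (-s * t)) :=
    (ae_restrict_mem measurableSet_Ioi).mono hF
  refine ⟨integrable_of_hasSum hint hsum ?_ hae, ?_⟩
  · refine ContinuousOn.aestronglyMeasurable ?_ measurableSet_Ioi
    exact (Complex.continuous_ofReal.comp_continuousOn (continuousOn_scaledDeriv hρ)).mul
      (by fun_prop)
  have h1 := hasSum_integral_of_summable_integral_norm hint hsum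
  rw [integral_congr_ae (hae.mono fun t ht => ht.tsum_eq)] at h1
  refine h1.unique ?_
  have hqn : ‖-s ^ (-ρ : ℂ)‖ < 1 := by
    rw [norm_neg, ← Complex.ofReal_neg, Complex.norm_cpow_of_ne_zero hsne]
    simp only [Complex.ofReal_re, Complex.ofReal_im, mul_zero, Real.exp_zero, div_one]
    exact Real.rpow_lt_one_of_one_lt_of_neg (hs.trans_le (Complex.re_le_norm s)) (by linarith)
  have h2 := (hasSum_coe_mul_geometric_of_norm_lt_one hqn).mul_left (-(ρ : ℂ) * s⁻¹)
  have hpow : s ^ (ρ : ℂ) ≠ 0 := by simp [Complex.cpow_eq_zero_iff, hsne]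
  convert! h2 using 1
  · funext k
    simp only [F]
    rw [integral_const_mul, laplace_rpow (hexp k) hs0]
    have hΓ : (Real.Gamma (ρ * k + 1) : ℂ) ≠ 0 := by exact_mod_cast (gamma_pos hρ k).ne'
    have hp : s ^ (-(((ρ * k : ℝ) : ℂ) + 1)) = (s ^ (-ρ : ℂ)) ^ k * s⁻¹ := by
      rw [neg_add, Complex.cpow_add _ _ hsne, Complex.cpow_neg_one, ← Complex.cpow_mul_nat]
      push_cast
      ring_nf
    rw [hp, neg_pow (s ^ (-ρ : ℂ))]
    simp only [c]
    push_cast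
    field_simp
  · rw [symbol, Complex.cpow_neg]
    push_cast
    rw [Complex.cpow_sub _ _ hsne, Complex.cpow_one]
    by_cases hz : 1 + s ^ (ρ : ℂ) = 0
    · have : 1 - -(s ^ (ρ : ℂ))⁻¹ = 0 := by
        field_simp
        linear_combination hz
      simp [hz, this]
    · have : 1 - -(s ^ (ρ : ℂ))⁻¹ = (1 + s ^ (ρ : ℂ)) / s ^ (ρ : ℂ) := by
        field_simp; ring
      rw [this]
      field_simp

/-! ### Laplace inversion and the uniform bound -/

/-- Laplace inversion on the line `Re s = 2`. -/
lemma scaledDeriv_eq_integral {ρ : ℝ} (hρ₁ : 1 < ρ) (hρ₂ : ρ < 2) {t : ℝ} (ht : 0 < t) :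
    ∫ y : ℝ, Complex.exp ((((2 : ℝ) : ℂ) + y * Complex.I) * t)
        * symbol ρ (((2 : ℝ) : ℂ) + y * Complex.I)
      = 2 * Real.pi * scaledDeriv ρ t := by
  set f : ℝ → ℂ := (Set.Ioi (0 : ℝ)).indicator
    fun t => (scaledDeriv ρ t : ℂ) * Complex.exp (-2 * t) with hf
  have hfi : Integrable f := by
    rw [hf, integrable_indicator_iff measurableSet_Ioi]
    exact (laplace_scaledDeriv hρ₁ (s := 2) (by norm_num)).1
  have hft (ξ : ℝ) : FourierTransform.fourier f ξ = symbol ρ (2 + (2 * Real.pi * ξ : ℝ) * Complex.I) := by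
    rw [Real.fourier_eq', ← (laplace_scaledDeriv hρ₁
      (s := 2 + (2 * Real.pi * ξ : ℝ) * Complex.I) (by simp)).2, ← integral_indicator measurableSet_Ioi]
    refine integral_congr_ae (ae_of_all _ fun v => ?_)
    simp only [hf, Set.indicator_apply]
    split_ifs
    · rw [smul_eq_mul, mul_left_comm, ← Complex.exp_add]
      congr 2
      simp
      ring
    · simp
  have hfti : Integrable (FourierTransform.fourier f) := by
    rw [funext hft]
    refine Integrable.comp_mul_left' (g := fun y : ℝ => symbol ρ (2 + y * Complex.I)) ?_
      (by positivity)
    refine (integrable_inv_one_add_sq.const_mul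
      (2 * ρ / (1 + Real.cos (ρ * (Real.pi / 2))))).mono' ?_ (ae_of_all _ fun y => ?_)
    · refine Continuous.aestronglyMeasurable ?_
      rw [continuous_iff_continuousAt]
      intro y
      refine ContinuousAt.comp (f := fun y : ℝ => (2 + y * Complex.I : ℂ)) (g := symbol ρ) ?_ ?_
      · exact (differentiableAt_symbol hρ₁ hρ₂ (by simp)).continuousAt
      · fun_prop
    · simpa using norm_symbol_le hρ₁ hρ₂ (s := 2 + y * Complex.I) (by simp)
  have hfc : ContinuousAt f t := by
    have h : ContinuousOn f (Set.Ioi 0) := by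
      refine ContinuousOn.congr (f := fun t => (scaledDeriv ρ t : ℂ) * Complex.exp (-2 * t)) ?_
        (Set.eqOn_indicator)
      exact (Complex.continuous_ofReal.comp_continuousOn (continuousOn_scaledDeriv hρ₁)).mul
        (by fun_prop)
    exact h.continuousAt (isOpen_Ioi.mem_nhds ht)
  have hinv := hfi.fourierInv_fourier_eq hfti hfc
  rw [Real.fourierInv_eq'] at hinv
  simp only [hft, smul_eq_mul] at hinv
  have hscale := Measure.integral_comp_mul_left
    (fun y : ℝ => Complex.exp ((y * t : ℝ) * Complex.I) * symbol ρ (2 + y * Complex.I)) (2 * Real.pi)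
  have hft' : f t = scaledDeriv ρ t * Complex.exp (-2 * t) := by simp [hf, ht]
  have h3 : ∫ v : ℝ, Complex.exp ((2 * Real.pi * inner ℝ v t : ℝ) * Complex.I)
      * symbol ρ (2 + (2 * Real.pi * v : ℝ) * Complex.I)
      = ∫ x : ℝ, Complex.exp (((2 * Real.pi * x) * t : ℝ) * Complex.I) *
        symbol ρ (2 + (2 * Real.pi * x : ℝ) * Complex.I) := by
    refine integral_congr_ae (ae_of_all _ fun v => ?_)
    simp only
    congr 4
    simp
    ring
  rw [h3, hscale, hft', abs_of_pos (by positivity), Complex.real_smul] at hinv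
  have h4 : ∫ y : ℝ, Complex.exp ((((2 : ℝ) : ℂ) + y * Complex.I) * t)
        * symbol ρ (((2 : ℝ) : ℂ) + y * Complex.I)
      = Complex.exp (2 * t) *
        ∫ y : ℝ, Complex.exp ((y * t : ℝ) * Complex.I) * symbol ρ (2 + y * Complex.I) := by
    rw [← integral_const_mul]
    refine integral_congr_ae (ae_of_all _ fun y => ?_)
    simp only
    rw [← mul_assoc, ← Complex.exp_add]
    push_cast
    congr 2
    ring
  have hpi : (Real.pi : ℂ) ≠ 0 := by exact_mod_cast Real.pi_ne_zero
  have hexp : Complex.exp (2 * t) * Complex.exp (-2 * t) = 1 := by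
    rw [← Complex.exp_add]; simp
  rw [h4]
  push_cast at hinv
  push_cast
  field_simp at hinv
  rw [← neg_mul] at hinv
  linear_combination Complex.exp (2 * t) * hinv + 2 * Real.pi * scaledDeriv ρ t * hexp

/-- Moving the line of integration to `Re s = 1/t` makes `|e^(st)| = e` on it, which gives a bound
independent of `t`. -/
lemma abs_scaledDeriv_le {ρ : ℝ} (hρ₁ : 1 < ρ) (hρ₂ : ρ < 2) :
    ∃ K : ℝ, 0 < K ∧ ∀ t : ℝ, 0 < t → |scaledDeriv ρ t| ≤ K := by
  have hκ := one_add_cos_pos hρ₁ hρ₂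
  set M := 2 * ρ / (1 + Real.cos (ρ * (Real.pi / 2))) with hM
  have hM0 : 0 < M := by positivity
  have hpi := Real.pi_pos
  refine ⟨Real.exp 1 * M, by positivity, fun t ht => ?_⟩
  set G : ℂ → ℂ := fun s => Complex.exp (s * t) * symbol ρ s
  have hGd (s : ℂ) (hs : 0 < s.re) : DifferentiableAt ℂ G s :=
    ((differentiableAt_id.mul_const (t : ℂ)).cexp).mul (differentiableAt_symbol hρ₁ hρ₂ hs)
  have hGn (s : ℂ) (hs : 0 < s.re) :
      ‖G s‖ ≤ Real.exp (s.re * t) * (M * (1 + s.im ^ 2)⁻¹) := by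
    simp only [G]
    rw [norm_mul, Complex.norm_exp]
    have := norm_symbol_le hρ₁ hρ₂ hs
    simp only [Complex.re_mul_ofReal]
    gcongr
  have hshift (a b : ℝ) (ha : 0 < a) (hab : a ≤ b) :
      ∫ y : ℝ, G (a + y * Complex.I) = ∫ y : ℝ, G (b + y * Complex.I) := by
    refine integral_vertical_eq (M := Real.exp (b * t) * M) hab
      (fun s h _ => hGd s (ha.trans_le h)) fun s h1 h2 => ?_
    refine (hGn s (ha.trans_le h1)).trans ?_
    rw [mul_assoc]
    gcongr
  have hline : ∫ y : ℝ, G ((t⁻¹ : ℝ) + y * Complex.I) = 2 * Real.pi * scaledDeriv ρ t := by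
    rw [← scaledDeriv_eq_integral hρ₁ hρ₂ ht]
    rcases le_total t⁻¹ 2 with h | h
    · exact hshift _ _ (by positivity) h
    · exact (hshift _ _ (by norm_num) h).symm
  have hb : ‖∫ y : ℝ, G ((t⁻¹ : ℝ) + y * Complex.I)‖
      ≤ ∫ y : ℝ, Real.exp 1 * (M * (1 + y ^ 2)⁻¹) := by
    refine norm_integral_le_of_norm_le
      ((integrable_inv_one_add_sq.const_mul M).const_mul _) (ae_of_all _ fun y => ?_)
    have h := hGn ((t⁻¹ : ℝ) + y * Complex.I) (by simpa using ht)
    simpa [ht.ne'] using h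
  rw [hline, integral_const_mul, integral_const_mul, integral_univ_inv_one_add_sq] at hb
  rw [norm_mul, norm_mul, Complex.norm_real, Complex.norm_real, Real.norm_of_nonneg hpi.le,
    Real.norm_eq_abs, Complex.norm_ofNat] at hb
  have h1 : 0 < Real.exp 1 * M := by positivity
  have h2 : Real.pi * (2 * |scaledDeriv ρ t|) ≤ Real.pi * (Real.exp 1 * M) := by linarith
  have h3 := le_of_mul_le_mul_left h2 hpi
  linarith

/-! ### Decay of the derivative and the increment estimate -/

/-- The derivative of `t ↦ E_ρ(-t^ρ)` is bounded near `0` by its series, and `O(1/t)` at infinity. -/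
lemma exists_deriv_bound {ρ : ℝ} (hρ₁ : 1 < ρ) (hρ₂ : ρ < 2) :
    ∃ K : ℝ, 0 < K ∧ ∀ t : ℝ, 0 < t → |scaledDeriv ρ t / t| ≤ K / (1 + t) := by
  obtain ⟨K, hK, h⟩ := abs_scaledDeriv_le hρ₁ hρ₂
  refine ⟨2 * (K + ρ * Real.exp 1), by positivity, fun t ht => ?_⟩
  rw [abs_div, abs_of_pos ht, div_le_div_iff₀ ht (by positivity)]
  have he : 0 < ρ * Real.exp 1 := by positivity
  rcases le_total t 1 with h1 | h1
  · have h2 : |scaledDeriv ρ t| ≤ ρ * Real.exp 1 * t := by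
      have h3 : t ^ ρ ≤ t := by
        simpa using Real.rpow_le_rpow_of_exponent_ge ht h1 hρ₁.le
      have h4 : |mlDeriv ρ (-t ^ ρ)| ≤ Real.exp 1 := by
        refine (abs_mlDeriv_le hρ₁ _).trans (Real.exp_le_exp.2 ?_)
        rw [abs_neg, abs_of_pos (by positivity)]
        linarith
      rw [scaledDeriv, abs_mul, abs_of_pos (by positivity : 0 < ρ * t ^ ρ)]
      calc ρ * t ^ ρ * |mlDeriv ρ (-t ^ ρ)| ≤ ρ * t * Real.exp 1 := by gcongr
        _ = _ := by ring
    have h5 : |scaledDeriv ρ t| * (1 + t) ≤ ρ * Real.exp 1 * t * 2 := by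
      gcongr
      linarith
    nlinarith
  · have h5 : |scaledDeriv ρ t| * (1 + t) ≤ K * (2 * t) := by
      gcongr
      · exact h t ht
      · linarith
    nlinarith

/-- Mean value inequality on `[v, v + d]`: the bound `K / (1 + t)` is largest at the left end. -/
lemma abs_sub_le {ρ K : ℝ} (hρ : 1 < ρ) (hK : 0 < K)
    (hb : ∀ t : ℝ, 0 < t → |scaledDeriv ρ t / t| ≤ K / (1 + t)) {v d : ℝ} (hv : 0 < v) (hd : 0 < d) :
    |mittagLeffler ρ (-(v + d) ^ ρ) - mittagLeffler ρ (-v ^ ρ)| ≤ K / (1 + v) * d := by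
  have h := Convex.norm_image_sub_le_of_norm_hasDerivWithin_le (𝕜 := ℝ)
    (f := fun t => mittagLeffler ρ (-t ^ ρ)) (f' := fun t => -(scaledDeriv ρ t / t))
    (s := Set.Icc v (v + d)) (C := K / (1 + v)) (x := v) (y := v + d)
    (fun t ht => (hasDerivAt_comp hρ (hv.trans_le ht.1)).hasDerivWithinAt)
    (fun t ht => by
      rw [norm_neg]
      refine (hb t (hv.trans_le ht.1)).trans ?_
      gcongr
      exact ht.1)
    (convex_Icc _ _) ⟨le_rfl, by linarith⟩ ⟨by linarith, le_rfl⟩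
  simpa [abs_of_pos hd] using h

/-- `-1 / (1 + l u)` is an antiderivative. -/
lemma integral_decay {l : ℝ} (hl : 0 < l) :
    IntegrableOn (fun u : ℝ => l / (1 + l * u) ^ 2) (Set.Ioi 0) ∧
      ∫ u in Set.Ioi (0 : ℝ), l / (1 + l * u) ^ 2 = 1 := by
  have hd (u : ℝ) (hu : 0 ≤ u) :
      HasDerivAt (fun u : ℝ => -(1 + l * u)⁻¹) (l / (1 + l * u) ^ 2) u := by
    have h0 : 1 + l * u ≠ 0 := by positivity
    convert! ((((hasDerivAt_id u).const_mul l).const_add 1).inv h0).neg using 1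
    simp
    ring
  have ht : Filter.Tendsto (fun u : ℝ => -(1 + l * u)⁻¹) Filter.atTop (nhds 0) := by
    rw [← neg_zero]
    exact ((Filter.tendsto_atTop_add_const_left _ _
      (Filter.tendsto_id.const_mul_atTop hl)).inv_tendsto_atTop).neg
  have hc : ContinuousWithinAt (fun u : ℝ => -(1 + l * u)⁻¹) (Set.Ici 0) 0 :=
    (hd 0 le_rfl).continuousAt.continuousWithinAt
  have hi := integrableOn_Ioi_deriv_of_nonneg hc (fun u hu => hd u (le_of_lt hu))
    (fun u hu => by positivity) ht
  refine ⟨hi, ?_⟩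
  rw [integral_Ioi_of_hasDerivAt_of_tendsto hc (fun u hu => hd u (le_of_lt hu)) hi ht]
  simp

end MittagLefflerIncrement

/-- For `1 < ρ < 2` there exists a constant `C > 0`, depending only on `ρ`, such that
for every `α > 0` and `h > 0`:
`∫_0^∞ (E_ρ(−α(u+h)^ρ) − E_ρ(−α u^ρ))² du ≤ C α^{1/ρ} h²`. -/
theorem stationary_increment_bound (ρ : ℝ) (hρ₁ : 1 < ρ) (hρ₂ : ρ < 2) :
    ∃ C : ℝ, 0 < C ∧ ∀ α : ℝ, 0 < α → ∀ h : ℝ, 0 < h →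
      ∫ u in Set.Ioi (0 : ℝ),
          (mittagLeffler ρ (-(α * (u + h) ^ ρ)) - mittagLeffler ρ (-(α * u ^ ρ))) ^ 2
        ≤ C * α ^ (1 / ρ) * h ^ 2 := by
  obtain ⟨K, hK, hb⟩ := MittagLefflerIncrement.exists_deriv_bound hρ₁ hρ₂
  refine ⟨K ^ 2, by positivity, fun α hα h hh => ?_⟩
  have hρ0 : ρ ≠ 0 := by linarith
  -- Rescaling by `α^(1/ρ)` reduces to `α = 1`.
  set l := α ^ (1 / ρ) with hl_def
  have hl : 0 < l := by positivity
  have hlρ : l ^ ρ = α := by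
    rw [hl_def, ← Real.rpow_mul hα.le, one_div_mul_cancel hρ0, Real.rpow_one]
  have hscale (u : ℝ) (hu : 0 < u) : α * u ^ ρ = (l * u) ^ ρ := by
    rw [Real.mul_rpow hl.le hu.le, hlρ]
  obtain ⟨hi, hv⟩ := MittagLefflerIncrement.integral_decay hl
  have hmono : ∫ u in Set.Ioi (0 : ℝ),
      (mittagLeffler ρ (-(α * (u + h) ^ ρ)) - mittagLeffler ρ (-(α * u ^ ρ))) ^ 2
      ≤ ∫ u in Set.Ioi (0 : ℝ), K ^ 2 * l * h ^ 2 * (l / (1 + l * u) ^ 2) := by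
    refine integral_mono_of_nonneg (ae_of_all _ fun u => sq_nonneg _) (hi.const_mul _) ?_
    filter_upwards [ae_restrict_mem measurableSet_Ioi] with u hu
    have hu' : 0 < u := hu
    have h1 := MittagLefflerIncrement.abs_sub_le hρ₁ hK hb (v := l * u) (d := l * h)
      (by positivity) (by positivity)
    rw [hscale u hu', hscale (u + h) (by positivity), mul_add, ← sq_abs]
    calc _ ≤ (K / (1 + l * u) * (l * h)) ^ 2 := by gcongr
      _ = _ := by field_simp
  rw [integral_const_mul, hv, mul_one] at hmono
  exact hmono
end
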